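/- arXiv:1109.3682 — 5 statements merged into one kernel-verified Lean document; each statement's English description precedes it below -/
import Mathlib

section
/- p-adic divisibility of moment sums over the affine base: for every m ≥ 1, the algebraic number N_m = Σ_{λ ∈ F_{q^m}^s} ((−1)^n T_m(λ))^k lies in ℤ[ζ_p], and letting 𝔭 be the unique maximal ideal of ℤ[ζ_p] lying over p and ord_q := v_𝔭/((p−1)·a) (so that ord_q(q) = 1, with the convention ord_q(0) = +∞), one has ord_q(N_m) ≥ m·w(Γ). -/
open scoped BigOperators Classical Pointwise

set_option maxHeartbeats 1000000
set_option synthInstance.maxHeartbeats 400000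

noncomputable section

namespace HS

/-- A fixed algebraic closure of the prime field `F_p`. -/
abbrev Omg (p : ℕ) [Fact p.Prime] : Type := AlgebraicClosure (ZMod p)

/-- The absolute trace `Tr_{F_{p^d}/F_p}(y) = ∑_{j<d} y^{p^j}`, read back in `ZMod p`
via the (injective) structure map `ZMod p → Omg p`. -/
def traceZmod (p : ℕ) [Fact p.Prime] (d : ℕ) (y : Omg p) : ZMod p :=
  Function.invFun (algebraMap (ZMod p) (Omg p)) (∑ j ∈ Finset.range d, y ^ p ^ j)

/-- Value of the Laurent monomial `x^μ`. -/
def mon {K : Type} [Field K] {n : ℕ} (x : Fin n → K) (μ : Fin n → ℤ) : K :=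
  ∏ i, x i ^ μ i

/-- Value of the Laurent polynomial `Ḡ(x,t) = f̄(x) + P̄(x,t)`, where `f̄` and `P̄` are given
by their (finitely supported) coefficient functions: for `P̄`, the index `(μ, γ)` records the
`x`-exponent `μ` and the `t`-exponent `γ`. -/
def Gval {K : Type} [Field K] {n s : ℕ} (f : (Fin n → ℤ) →₀ K)
    (P : ((Fin n → ℤ) × (Fin s → ℤ)) →₀ K) (x : Fin n → K) (t : Fin s → K) : K :=
  (f.sum fun μ c => c * mon x μ) + P.sum fun gm c => c * mon x gm.1 * mon t gm.2

/-- View an integral exponent vector as a real vector. -/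
def toR {n : ℕ} (u : Fin n → ℤ) : Fin n → ℝ := fun i => (u i : ℝ)

/-- The Newton polyhedron at infinity `Δ_∞(f̄)`: convex hull of the origin and the
exponent vectors of the monomials of `f̄`. -/
def NewtonPoly {K : Type} [Field K] {n : ℕ} (f : (Fin n → ℤ) →₀ K) : Set (Fin n → ℝ) :=
  convexHull ℝ (insert 0 (toR '' (f.support : Set (Fin n → ℤ))))

/-- The value at `x` of `x_i ∂f̄^σ/∂x_i`, where `f̄^σ` is the sum of the terms of `f̄`
whose exponent vector lies in the face `σ`. -/
def faceSum {K : Type} [Field K] {n : ℕ} (f : (Fin n → ℤ) →₀ K) (σ : Set (Fin n → ℝ))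
    (i : Fin n) (x : Fin n → K) : K :=
  ∑ μ ∈ f.support.filter (fun μ => toR μ ∈ σ), (μ i : K) * f μ * mon x μ

/-- Nondegeneracy of `f̄` with respect to its Newton polyhedron at infinity: for every
closed face (= exposed subset) not containing the origin, the logarithmic partials of
`f̄^σ` have no common zero with all coordinates nonzero. -/
def Nondeg {K : Type} [Field K] {n : ℕ} (f : (Fin n → ℤ) →₀ K) : Prop :=
  ∀ σ : Set (Fin n → ℝ), IsExposed ℝ (NewtonPoly f) σ → σ.Nonempty → (0 : Fin n → ℝ) ∉ σ →
    ¬ ∃ x : Fin n → K, (∀ i, x i ≠ 0) ∧ ∀ i, faceSum f σ i x = 0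

/-- The relative polytope `Γ`: convex hull of the origin and the points `(1/(1-w(μ)))•γ`
for `(μ,γ)` running over the exponents of `P̄`; here `w` is the gauge of `Δ_∞(f̄)`. -/
def relPoly {K : Type} [Field K] {n s : ℕ} (f : (Fin n → ℤ) →₀ K)
    (P : ((Fin n → ℤ) × (Fin s → ℤ)) →₀ K) : Set (Fin s → ℝ) :=
  convexHull ℝ (insert 0 ((fun gm : (Fin n → ℤ) × (Fin s → ℤ) =>
    (1 - gauge (NewtonPoly f) (toR gm.1))⁻¹ • toR gm.2) '' (P.support : Set _)))

/-- Dimension of the smallest linear subspace containing a set. -/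
def dimSpan {s : ℕ} (Γ : Set (Fin s → ℝ)) : ℕ :=
  Module.finrank ℝ (Submodule.span ℝ Γ)

/-- The lattice-normalized `d`-dimensional volume of a rational polytope `Γ`, defined
(Ehrhart-style) as `lim_{m→∞} #(mΓ ∩ ℤ^s)/m^d`.  When `d` is the dimension of the span of
`Γ`, this is the volume of `Γ` computed in that span with respect to the Haar measure
normalized so that a fundamental domain of the lattice has volume 1. -/
def latticeVol {s : ℕ} (Γ : Set (Fin s → ℝ)) (d : ℕ) : ℝ :=
  Filter.limUnder Filter.atTop fun m : ℕ =>
    (Nat.card {u : Fin s → ℤ // toR u ∈ (m : ℝ) • Γ} : ℝ) / (m : ℝ) ^ d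

/-- The cone over a set: union of the rays from the origin through its points. -/
def coneOf {s : ℕ} (Γ : Set (Fin s → ℝ)) : Set (Fin s → ℝ) :=
  {v | ∃ c : ℝ, 0 ≤ c ∧ ∃ γ ∈ Γ, v = c • γ}

/-- `w(Γ) = min { w_Γ(u) : u ∈ ℤ^s ∩ Cone(Γ), all coordinates of u ≥ 1 }`,
where `w_Γ` is the gauge of `Γ`. -/
def wMin {s : ℕ} (Γ : Set (Fin s → ℝ)) : ℝ :=
  sInf {r : ℝ | ∃ u : Fin s → ℤ, (∀ i, (1 : ℤ) ≤ u i) ∧ toR u ∈ coneOf Γ ∧ r = gauge Γ (toR u)}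

/-- The cyclotomic field `ℚ(ζ)` inside `ℂ`. -/
def cyclo (ζ : ℂ) : Subfield ℂ := Subfield.closure {ζ}

/-- The toric exponential sum `∑_{x ∈ (F_{p^d}^×)^n} Θ(Tr(Ḡ(x,t)))`. -/
def torSum (p : ℕ) [Fact p.Prime] {n s : ℕ} (Θ : AddChar (ZMod p) ℂ)
    (f : (Fin n → ℤ) →₀ Omg p) (P : ((Fin n → ℤ) × (Fin s → ℤ)) →₀ Omg p)
    (d : ℕ) (t : Fin s → Omg p) : ℂ :=
  ∑ᶠ (x : Fin n → Omg p) (_ : ∀ i, x i ^ p ^ d = x i ∧ x i ≠ 0),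
    Θ (traceZmod p d (Gval f P x t))

/-- `N_m` for the `k`-th tensor power family over the torus `G_m^s`. -/
def Ntor (p a : ℕ) [Fact p.Prime] {n s : ℕ} (Θ : AddChar (ZMod p) ℂ)
    (f : (Fin n → ℤ) →₀ Omg p) (P : ((Fin n → ℤ) × (Fin s → ℤ)) →₀ Omg p)
    (k m : ℕ) : ℂ :=
  ∑ᶠ (t : Fin s → Omg p) (_ : ∀ j, t j ^ p ^ (a * m) = t j ∧ t j ≠ 0),
    ((-1 : ℂ) ^ n * torSum p Θ f P (a * m) t) ^ k

/-- `N_m` for the `k`-th tensor power family over the affine base `A^s`. -/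
def Naff (p a : ℕ) [Fact p.Prime] {n s : ℕ} (Θ : AddChar (ZMod p) ℂ)
    (f : (Fin n → ℤ) →₀ Omg p) (P : ((Fin n → ℤ) × (Fin s → ℤ)) →₀ Omg p)
    (k m : ℕ) : ℂ :=
  ∑ᶠ (t : Fin s → Omg p) (_ : ∀ j, t j ^ p ^ (a * m) = t j),
    ((-1 : ℂ) ^ n * torSum p Θ f P (a * m) t) ^ k

/-- The `𝔭`-adic valuation of an algebraic number `x` lying in the ring of integers of a
subfield `F ⊆ ℂ`: the largest `t` with `x ∈ 𝔭^t`. -/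
def ordIn (F : Subfield ℂ) (Pid : Ideal (NumberField.RingOfIntegers F)) (x : ℂ) : ℕ :=
  sSup {t : ℕ | ∃ y : NumberField.RingOfIntegers F,
    ((algebraMap (NumberField.RingOfIntegers F) F y : F) : ℂ) = x ∧ y ∈ Pid ^ t}

/-- The `𝔭`-adic valuation on a subring of `ℂ`. -/
def ordSub (R0 : Subring ℂ) (Pid : Ideal R0) (x : ℂ) : ℕ :=
  sSup {t : ℕ | ∃ y : R0, (y : ℂ) = x ∧ y ∈ Pid ^ t}

/-- The degree `[F_q(λ):F_q]` of a point `λ ∈ F̄_q^s`, where `q = p^a`. -/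
def degOf (p a : ℕ) [Fact p.Prime] {s : ℕ} (lam : Fin s → Omg p) : ℕ :=
  sInf {d : ℕ | 0 < d ∧ ∀ j, lam j ^ p ^ (a * d) = lam j}

theorem hs_sum_units {F V k : Type*} [Field F] [Fintype F] [CommRing V] [IsDomain V] [Field k]
    (red : V →+* k) (ι : F →+* k) (ω : F →*₀ V) (hω : ∀ y, red (ω y) = ι y) (r : ℕ)
    (hr : ¬ (Fintype.card F - 1) ∣ r) : ∑ z : Fˣ, ω (z : F) ^ r = 0 := by
  let φ : Fˣ →* V := (powMonoidHom r).comp ((ω : F →* V).comp (Units.coeHom F))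
  have hφ : φ ≠ 1 := by
    intro h
    apply hr
    rw [← FiniteField.forall_pow_eq_one_iff]
    intro x
    have h1 : φ x = 1 := by rw [h]; rfl
    have h2 : ω (x : F) ^ r = 1 := h1
    have h3 : ι ((x : F) ^ r) = ι 1 := by
      rw [map_pow, ← hω, ← map_pow, h2, map_one, map_one]
    have h4 := ι.injective h3
    ext
    simpa using h4
  exact sum_hom_units_eq_zero φ hφ

/-- Gauss sum. -/
def hsC {F V : Type*} [Field F] [Fintype F] [CommRing V] (ω : F →*₀ V) (ψ : AddChar F V)
    (r : ℕ) : V := ∑ y : Fˣ, ω ((y⁻¹ : Fˣ) : F) ^ r * ψ (y : F)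

/-- Jacobi sum. -/
def hsK {F V : Type*} [Field F] [Fintype F] [CommRing V] (ω : F →*₀ V)
    (a b : ℕ) : V := ∑ u : Fˣ, ω ((u⁻¹ : Fˣ) : F) ^ a * ω (1 + u) ^ (a + b)

theorem hs_mul {F V k : Type*} [Field F] [Fintype F] [CommRing V] [IsDomain V] [Field k]
    (red : V →+* k) (ι : F →+* k) (ω : F →*₀ V) (hω : ∀ y, red (ω y) = ι y) (ψ : AddChar F V)
    (a b : ℕ) (hr : ¬ (Fintype.card F - 1) ∣ a + b) :
    hsC ω ψ a * hsC ω ψ b = hsK ω a b * hsC ω ψ (a + b) := by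
  have hab : a + b ≠ 0 := by intro h; rw [h] at hr; exact hr (dvd_zero _)
  have inner : ∀ u : Fˣ, ∑ z : Fˣ, ω ((z⁻¹ : Fˣ) : F) ^ (a + b) * ψ ((1 + u) * z)
      = ω (1 + u) ^ (a + b) * hsC ω ψ (a + b) := by
    intro u
    by_cases h : (1 + u : F) = 0
    · rw [h]
      simp only [zero_mul, AddChar.map_zero_eq_one, mul_one, map_zero, zero_pow hab]
      rw [← hs_sum_units red ι ω hω (a + b) hr]
      exact Equiv.sum_comp (Equiv.inv Fˣ) (fun z : Fˣ => ω (z : F) ^ (a + b))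
    · obtain ⟨v, hv⟩ : ∃ v : Fˣ, (v : F) = 1 + u := ⟨Units.mk0 _ h, rfl⟩
      rw [← hv, hsC, Finset.mul_sum]
      rw [← Equiv.sum_comp (Equiv.mulLeft v⁻¹)]
      refine Finset.sum_congr rfl fun z _ => ?_
      simp only [Equiv.coe_mulLeft]
      rw [mul_inv_rev, inv_inv, Units.val_mul, Units.val_mul, map_mul, mul_pow]
      rw [Units.mul_inv_cancel_left]
      ring
  calc hsC ω ψ a * hsC ω ψ b
      = ∑ z : Fˣ, ∑ y : Fˣ, (ω ((y⁻¹ : Fˣ) : F) ^ a * ψ (y : F)) *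
          (ω ((z⁻¹ : Fˣ) : F) ^ b * ψ (z : F)) := by
        rw [hsC, hsC, Finset.sum_mul_sum, Finset.sum_comm]
    _ = ∑ z : Fˣ, ∑ u : Fˣ, ω ((u⁻¹ : Fˣ) : F) ^ a *
          (ω ((z⁻¹ : Fˣ) : F) ^ (a + b) * ψ ((1 + u) * z)) := by
        refine Finset.sum_congr rfl fun z _ => ?_
        rw [← Equiv.sum_comp (Equiv.mulRight z)]
        refine Finset.sum_congr rfl fun u _ => ?_
        simp only [Equiv.coe_mulRight]
        rw [mul_inv_rev, Units.val_mul, Units.val_mul, map_mul, mul_pow, add_mul, one_mul,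
          AddChar.map_add_eq_mul, pow_add]
        ring
    _ = _ := by
        rw [Finset.sum_comm, hsK, Finset.sum_mul]
        refine Finset.sum_congr rfl fun u _ => ?_
        rw [← Finset.mul_sum, inner, mul_assoc]

theorem hs_K_red {F V k : Type*} [Field F] [Fintype F] [CommRing V] [Field k]
    (red : V →+* k) (ι : F →+* k) (ω : F →*₀ V) (hω : ∀ y, red (ω y) = ι y)
    (a b : ℕ) (hr : a + b < Fintype.card F - 1) :
    red (hsK ω a b) = - ((a + b).choose a : k) := by
  have h1 : red (hsK ω a b) = ι (∑ u : Fˣ, ((u⁻¹ : Fˣ) : F) ^ a * (1 + u) ^ (a + b)) := by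
    simp only [hsK, map_sum, map_mul, map_pow, hω]
  have h2 : ∑ u : Fˣ, ((u⁻¹ : Fˣ) : F) ^ a * (1 + u : F) ^ (a + b) = - ((a + b).choose a : F) := by
    have h3 : ∀ u : Fˣ, ((u⁻¹ : Fˣ) : F) ^ a * (1 + u : F) ^ (a + b)
        = ∑ m ∈ Finset.range (a + b + 1),
          (u : F) ^ (m + (Fintype.card F - 1 - a)) * ((a + b).choose m : F) := by
      intro u
      have h4 : ((u⁻¹ : Fˣ) : F) ^ a = (u : F) ^ (Fintype.card F - 1 - a) := by
        have h5 : (u : F) ^ (Fintype.card F - 1) = 1 :=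
          FiniteField.pow_card_sub_one_eq_one _ u.ne_zero
        have h6 : (u : F) ^ (Fintype.card F - 1 - a) * (u : F) ^ a = 1 := by
          rw [← pow_add, Nat.sub_add_cancel (by omega), h5]
        rw [Units.val_inv_eq_inv_val, inv_pow]
        exact (eq_inv_of_mul_eq_one_left h6).symm
      rw [h4, add_comm (1 : F), add_pow, Finset.mul_sum]
      refine Finset.sum_congr rfl fun m _ => ?_
      rw [one_pow, pow_add]; ring
    simp only [h3]
    rw [Finset.sum_comm]
    simp only [← Finset.sum_mul, FiniteField.sum_pow_units]
    rw [Finset.sum_eq_single a]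
    · rw [if_pos]
      · ring
      · rw [Nat.add_sub_cancel' (by omega)]
    · intro m hm hma
      rw [if_neg, zero_mul]
      rintro ⟨c, hc⟩
      have hm' := Finset.mem_range.1 hm
      have : c = 1 := by
        rcases c with _ | _ | c
        · omega
        · rfl
        · have h9 : (Fintype.card F - 1) * 2 ≤ (Fintype.card F - 1) * (c + 1 + 1) :=
            Nat.mul_le_mul_left _ (by omega)
          rw [← hc] at h9
          omega
      subst this
      omega
    · intro h; exact absurd (Finset.mem_range.2 (by omega)) h
  rw [h1, h2, map_neg, map_natCast]

theorem hs_choose (p : ℕ) [Fact p.Prime] (j : ℕ) : ∀ r : ℕ,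
    r.choose (p ^ j) ≡ r / p ^ j [MOD p] := by
  induction j with
  | zero => intro r; simp; rfl
  | succ j ih =>
    intro r
    have h := Choose.choose_modEq_choose_mod_mul_choose_div_nat (n := r) (k := p ^ (j + 1)) (p := p)
    have hp := (Fact.out : p.Prime).pos
    rw [pow_succ, Nat.mul_mod_left, Nat.choose_zero_right, one_mul, Nat.mul_div_cancel _ hp] at h
    rw [pow_succ, mul_comm, ← Nat.div_div_eq_div_mul, mul_comm]
    exact h.trans (ih _)

theorem hs_step {F V k : Type*} [Field F] [Fintype F] [CommRing V] [IsDomain V] [Field k]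
    (p : ℕ) [Fact p.Prime] [CharP k p]
    (red : V →+* k) (hred : ∀ x, red x ≠ 0 → IsUnit x)
    (ι : F →+* k) (ω : F →*₀ V) (hω : ∀ y, red (ω y) = ι y) (ψ : AddChar F V)
    (π : V) (hψ : ∀ y, π ∣ ψ y - 1)
    (r j n : ℕ) (hr : r + p ^ j < Fintype.card F - 1) (hd : ¬ p ∣ (r + p ^ j) / p ^ j)
    (h : π ^ n ∣ hsC ω ψ r) : π ^ (n + 1) ∣ hsC ω ψ (r + p ^ j) := by
  have hp := (Fact.out : p.Prime).pos
  have hpj : 0 < p ^ j := pow_pos hp _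
  have nd : ∀ x, 0 < x → x < Fintype.card F - 1 → ¬ (Fintype.card F - 1) ∣ x :=
    fun x hx hx' hdv => absurd (Nat.le_of_dvd hx hdv) (by omega)
  have hC : π ∣ hsC ω ψ (p ^ j) := by
    have e : hsC ω ψ (p ^ j) = ∑ y : Fˣ, ω ((y⁻¹ : Fˣ) : F) ^ (p ^ j) * (ψ (y : F) - 1) := by
      simp only [mul_sub, mul_one, Finset.sum_sub_distrib]
      have : ∑ y : Fˣ, ω ((y⁻¹ : Fˣ) : F) ^ (p ^ j) = 0 := by
        rw [← hs_sum_units red ι ω hω (p ^ j) (nd _ hpj (by omega))]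
        exact Equiv.sum_comp (Equiv.inv Fˣ) (fun z : Fˣ => ω (z : F) ^ (p ^ j))
      rw [this, sub_zero, hsC]
    rw [e]
    exact Finset.dvd_sum fun y _ => Dvd.dvd.mul_left (hψ _) _
  have hm := hs_mul red ι ω hω ψ r (p ^ j) (nd _ (by omega) hr)
  have hK : IsUnit (hsK ω r (p ^ j)) := by
    apply hred
    rw [hs_K_red red ι ω hω r (p ^ j) hr, neg_ne_zero, Ne, CharP.cast_eq_zero_iff k p]
    intro hdv
    apply hd
    rw [Nat.choose_symm_add] at hdv
    exact ((hs_choose p j (r + p ^ j)).dvd_iff dvd_rfl).1 hdv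
  have h2 : π ^ (n + 1) ∣ hsK ω r (p ^ j) * hsC ω ψ (r + p ^ j) := by
    rw [← hm, pow_succ]; exact mul_dvd_mul h hC
  exact (hK.dvd_mul_left).1 h2

/-- digit sum -/
def hsS (p d r : ℕ) : ℕ := ∑ j ∈ Finset.range d, r / p ^ j % p

theorem hs_stick {F V k : Type*} [Field F] [Fintype F] [CommRing V] [IsDomain V] [Field k]
    (p : ℕ) [Fact p.Prime] [CharP k p]
    (red : V →+* k) (hred : ∀ x, red x ≠ 0 → IsUnit x)
    (ι : F →+* k) (ω : F →*₀ V) (hω : ∀ y, red (ω y) = ι y) (ψ : AddChar F V)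
    (π : V) (hψ : ∀ y, π ∣ ψ y - 1) (r : ℕ) (hr : r < Fintype.card F - 1) (j : ℕ) :
    π ^ hsS p j r ∣ hsC ω ψ (r % p ^ j) := by
  have hp := (Fact.out : p.Prime).pos
  induction j with
  | zero => simp [hsS]
  | succ j ih =>
    have hpj : 0 < p ^ j := pow_pos hp _
    have hle : r % p ^ (j + 1) ≤ r := Nat.mod_le _ _
    rw [Nat.mod_pow_succ] at hle ⊢
    have hS : hsS p (j + 1) r = hsS p j r + r / p ^ j % p := Finset.sum_range_succ _ _
    rw [hS]
    have hlt : r / p ^ j % p < p := Nat.mod_lt _ hp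
    generalize r / p ^ j % p = c at *
    clear hS
    induction c with
    | zero => simpa using ih
    | succ c ihc =>
      have h1 := ihc (by nlinarith) (by omega)
      have e : r % p ^ j + p ^ j * (c + 1) = (r % p ^ j + p ^ j * c) + p ^ j := by ring
      rw [e, ← add_assoc]
      apply hs_step p red hred ι ω hω ψ π hψ _ _ _ (by rw [← e]; omega) _ h1
      rw [← e, Nat.add_mul_div_left _ _ hpj, Nat.div_eq_of_lt (Nat.mod_lt _ hpj), zero_add]
      intro hdv
      exact absurd (Nat.le_of_dvd (by omega) hdv) (by omega)

theorem hs_sum_split {F V : Type*} [Field F] [Fintype F] [CommRing V] (g : F → V) :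
    ∑ y : F, g y = g 0 + ∑ y : Fˣ, g (y : F) := by
  rw [Fintype.sum_eq_add_sum_subtype_ne g 0]
  congr 1
  exact (Equiv.sum_comp (unitsEquivNeZero (G₀ := F)) (fun y => g y.1)).symm

theorem hs_char_sum {F V ι' : Type*} [AddCommMonoid F] [CommRing V] (ψ : AddChar F V)
    (S : Finset ι') (g : ι' → F) : ψ (∑ i ∈ S, g i) = ∏ i ∈ S, ψ (g i) := by
  induction S using Finset.induction_on with
  | empty => simp
  | insert i S hi ih => rw [Finset.sum_insert hi, Finset.prod_insert hi, AddChar.map_add_eq_mul, ih]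

theorem hs_expand {F V k : Type*} [Field F] [Fintype F] [CommRing V] [IsDomain V] [Field k]
    (p d : ℕ) [Fact p.Prime] [CharP k p] (hd : 1 ≤ d) (hcard : Fintype.card F = p ^ d)
    (red : V →+* k) (hred : ∀ x, red x ≠ 0 → IsUnit x)
    (ι : F →+* k) (ω : F →*₀ V) (hω : ∀ y, red (ω y) = ι y) (ψ : AddChar F V)
    (π : V) (hψ : ∀ y, π ∣ ψ y - 1) (hπ : π ^ (p - 1) ∣ (p : V)) :
    ∃ c : ℕ → V, (∀ r < p ^ d, π ^ hsS p d r ∣ c r) ∧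
      ∀ y, ψ y = ∑ r ∈ Finset.range (p ^ d), c r * ω y ^ r := by
  have hp := (Fact.out : p.Prime).pos
  have hQ : 2 ≤ p ^ d := by
    calc 2 ≤ p := (Fact.out : p.Prime).two_le
      _ = p ^ 1 := (pow_one p).symm
      _ ≤ p ^ d := Nat.pow_le_pow_right hp hd
  have hpow1 : ∀ y : F, y ≠ 0 → ω y ^ (p ^ d - 1) = 1 := by
    intro y hy
    rw [← map_pow, ← hcard, FiniteField.pow_card_sub_one_eq_one y hy, map_one]
  have hunit : IsUnit ((p ^ d - 1 : ℕ) : V) := by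
    apply hred
    rw [map_natCast, Nat.cast_sub (by omega), Nat.cast_pow, CharP.cast_eq_zero, zero_pow (by omega)]
    simp
  obtain ⟨u, hu⟩ := hunit.exists_left_inv
  let c : ℕ → V := fun r => if r = 0 then 1 else if r = p ^ d - 1 then u * hsC ω ψ 0 - 1
    else u * hsC ω ψ r
  refine ⟨c, ?_, ?_⟩
  · intro r hr
    by_cases h0 : r = 0
    · subst h0; simp [hsS]
    by_cases h1 : r = p ^ d - 1
    · have hle : hsS p d r ≤ (p - 1) * d := by
        calc hsS p d r ≤ ∑ j ∈ Finset.range d, (p - 1) :=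
              Finset.sum_le_sum fun j _ => Nat.le_sub_one_of_lt (Nat.mod_lt _ hp)
          _ = _ := by simp [mul_comm]
      have hQd : π ^ ((p - 1) * d) ∣ ((p ^ d : ℕ) : V) := by
        rw [pow_mul, Nat.cast_pow]; exact pow_dvd_pow_of_dvd hπ d
      refine (pow_dvd_pow π hle).trans ?_
      simp only [c, if_neg h0, if_pos h1]
      have hs : hsC ω ψ 0 = (∑ y : F, ψ y) - 1 := by
        rw [hsC]
        simp only [pow_zero, one_mul]
        rw [hs_sum_split (fun y : F => ψ y), AddChar.map_zero_eq_one]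
        ring
      have key : u * hsC ω ψ 0 - 1 = u * ((∑ y : F, ψ y) - ((p ^ d : ℕ) : V)) := by
        rw [hs]
        have : u * ((p ^ d : ℕ) : V) = 1 + u := by
          have : ((p ^ d : ℕ) : V) = ((p ^ d - 1 : ℕ) : V) + 1 := by
            rw [← Nat.cast_add_one, Nat.sub_add_cancel (by omega)]
          rw [this, mul_add, hu, mul_one]
        rw [mul_sub, mul_sub, this]; ring
      rw [key]
      refine Dvd.dvd.mul_left (dvd_sub ?_ hQd) _
      rw [AddChar.sum_eq_ite]
      split_ifs
      · rw [hcard]; exact hQd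
      · exact dvd_zero _
    · simp only [c, if_neg h0, if_neg h1]
      have := hs_stick p red hred ι ω hω ψ π hψ r (by rw [hcard]; omega) d
      rw [Nat.mod_eq_of_lt hr] at this
      exact Dvd.dvd.mul_left this _
  · intro y
    have hsplit : Finset.range (p ^ d) = Finset.range (p ^ d - 1 + 1) := by
      rw [Nat.sub_add_cancel (by omega)]
    by_cases hy : y = 0
    · subst hy
      rw [Finset.sum_eq_single 0]
      · simp [c]
      · intro r _ hr; simp [hr]
      · intro h; exact absurd (Finset.mem_range.2 (by omega)) h
    · have hy1 := hpow1 y hy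
      have e1 : ∑ r ∈ Finset.range (p ^ d), c r * ω y ^ r
          = ∑ r ∈ Finset.range (p ^ d - 1), u * hsC ω ψ r * ω y ^ r := by
        rw [hsplit, Finset.sum_range_succ, hy1]
        obtain ⟨N, hN⟩ : ∃ N, p ^ d - 1 = N + 1 := ⟨p ^ d - 2, by omega⟩
        have hcl : c (N + 1) = u * hsC ω ψ 0 - 1 := by simp [c, hN]
        rw [hN, Finset.sum_range_succ', Finset.sum_range_succ', hcl]
        have : ∀ r ∈ Finset.range N, c (r + 1) * ω y ^ (r + 1)
            = u * hsC ω ψ (r + 1) * ω y ^ (r + 1) := by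
          intro r hr
          have := Finset.mem_range.1 hr
          simp only [c, hN]
          rw [if_neg (by omega), if_neg (by omega)]
        rw [Finset.sum_congr rfl this]
        simp [c]
      rw [e1]
      simp only [hsC, Finset.mul_sum, Finset.sum_mul]
      rw [Finset.sum_comm, Finset.sum_eq_single (Units.mk0 y hy)]
      · have : ∀ r ∈ Finset.range (p ^ d - 1), u * (ω (((Units.mk0 y hy)⁻¹ : Fˣ) : F) ^ r *
            ψ ((Units.mk0 y hy : Fˣ) : F)) * ω y ^ r = u * ψ y := by
          intro r _
          have h1 : ω (((Units.mk0 y hy)⁻¹ : Fˣ) : F) ^ r * ω y ^ r = 1 := by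
            rw [← mul_pow, ← map_mul]; simp [hy]
          rw [Units.val_mk0]
          linear_combination (u * ψ y) * h1
        rw [Finset.sum_congr rfl this, Finset.sum_const, Finset.card_range, nsmul_eq_mul]
        linear_combination (- ψ y) * hu
      · intro z _ hz
        have : ∀ r ∈ Finset.range (p ^ d - 1), u * (ω ((z⁻¹ : Fˣ) : F) ^ r * ψ (z : F)) * ω y ^ r
            = u * ψ (z : F) * ω ((z⁻¹ : Fˣ) * y) ^ r := by
          intro r _
          rw [map_mul, mul_pow]; ring
        rw [Finset.sum_congr rfl this, ← Finset.mul_sum]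
        have hne : ω ((z⁻¹ : Fˣ) * y) ≠ 1 := by
          intro h
          have h2 := hω ((z⁻¹ : Fˣ) * y)
          rw [h, map_one, ← map_one ι] at h2
          have h3 := ι.injective h2
          apply hz
          ext
          rw [Units.val_mk0]
          have : (z : F) * (((z⁻¹ : Fˣ) : F) * y) = y := by simp
          rw [← h3, mul_one] at this
          exact this
        have hg := mul_geom_sum (ω ((z⁻¹ : Fˣ) * y)) (p ^ d - 1)
        rw [hpow1 _ (mul_ne_zero (Units.ne_zero _) hy), sub_self] at hg
        rcases mul_eq_zero.1 hg with h | h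
        · exact absurd (sub_eq_zero.1 h) hne
        · rw [h, mul_zero]
      · intro h; exact absurd (Finset.mem_univ _) h

theorem hs_tsum {F V k ι' : Type*} [Field F] [Fintype F] [CommRing V] [IsDomain V] [Field k]
    [Fintype ι'] {s : ℕ}
    (p d T : ℕ) [Fact p.Prime] [CharP k p] (hd : 1 ≤ d) (hcard : Fintype.card F = p ^ d)
    (red : V →+* k) (hred : ∀ x, red x ≠ 0 → IsUnit x)
    (ι : F →+* k) (ω : F →*₀ V) (hω : ∀ y, red (ω y) = ι y) (ψ : AddChar F V)
    (π : V) (hψ : ∀ y, π ∣ ψ y - 1) (hπ : π ^ (p - 1) ∣ (p : V))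
    (B : ι' → Fin s → ℕ)
    (hB : ∀ r : ι' → ℕ, (∀ i, r i < p ^ d) → (∀ j, (p ^ d - 1) ∣ ∑ i, r i * B i j) →
      T ≤ ∑ i, hsS p d (r i) +
        d * (p - 1) * (Finset.univ.filter fun j => ∑ i, r i * B i j = 0).card)
    (b : ι' → F) :
    π ^ T ∣ ∑ t : Fin s → F, ψ (∑ i, b i * ∏ j, t j ^ B i j) := by
  obtain ⟨c, hc, hexp⟩ := hs_expand p d hd hcard red hred ι ω hω ψ π hψ hπ
  have hp := (Fact.out : p.Prime).pos
  have hQd : π ^ (d * (p - 1)) ∣ ((p ^ d : ℕ) : V) := by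
    rw [mul_comm, pow_mul, Nat.cast_pow]; exact pow_dvd_pow_of_dvd hπ d
  have e1 : ∀ t : Fin s → F, ψ (∑ i, b i * ∏ j, t j ^ B i j)
      = ∑ r ∈ Fintype.piFinset (fun _ : ι' => Finset.range (p ^ d)),
        (∏ i, (c (r i) * ω (b i) ^ r i)) * ∏ j, ω (t j) ^ (∑ i, r i * B i j) := by
    intro t
    rw [hs_char_sum]
    simp only [hexp]
    rw [Finset.prod_univ_sum]
    refine Finset.sum_congr rfl fun r _ => ?_
    have : ∏ j, ω (t j) ^ (∑ i, r i * B i j) = ∏ i, (∏ j, ω (t j) ^ B i j) ^ r i := by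
      simp only [← Finset.prod_pow_eq_pow_sum, ← Finset.prod_pow]
      rw [Finset.prod_comm]
      refine Finset.prod_congr rfl fun i _ => Finset.prod_congr rfl fun j _ => ?_
      rw [← pow_mul, mul_comm]
    rw [this, ← Finset.prod_mul_distrib]
    refine Finset.prod_congr rfl fun i _ => ?_
    rw [map_mul, map_prod, mul_pow, mul_assoc]
    simp only [map_pow]
  simp only [e1]
  rw [Finset.sum_comm]
  refine Finset.dvd_sum fun r hr => ?_
  have hr' : ∀ i, r i < p ^ d := fun i => Finset.mem_range.1 (Fintype.mem_piFinset.1 hr i)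
  rw [← Finset.mul_sum]
  have e2 : ∑ t : Fin s → F, ∏ j, ω (t j) ^ (∑ i, r i * B i j)
      = ∏ j, ∑ y : F, ω y ^ (∑ i, r i * B i j) := by
    rw [Finset.prod_univ_sum, Fintype.piFinset_univ]
  rw [e2]
  have hun : ∀ e : ℕ, e ≠ 0 → ∑ y : F, ω y ^ e = ∑ y : Fˣ, ω (y : F) ^ e := by
    intro e he
    rw [hs_sum_split (fun y => ω y ^ e)]
    simp [he]
  by_cases hdv : ∀ j, (p ^ d - 1) ∣ ∑ i, r i * B i j
  · refine (pow_dvd_pow π (hB r hr' hdv)).trans ?_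
    rw [pow_add]
    refine mul_dvd_mul ?_ ?_
    · rw [← Finset.prod_pow_eq_pow_sum]
      exact Finset.prod_dvd_prod_of_dvd _ _ fun i _ => Dvd.dvd.mul_right (hc _ (hr' i)) _
    · rw [pow_mul, ← Finset.prod_const, Finset.prod_filter]
      refine Finset.prod_dvd_prod_of_dvd _ _ fun j _ => ?_
      split_ifs with h0
      · rw [h0]
        simpa [hcard] using hQd
      · exact one_dvd _
  · push Not at hdv
    obtain ⟨j, hj⟩ := hdv
    have h0 : ∑ y : F, ω y ^ (∑ i, r i * B i j) = 0 := by
      rw [hun _ (by intro h; rw [h] at hj; exact hj (dvd_zero _))]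
      exact hs_sum_units red ι ω hω _ (by rw [hcard]; exact hj)
    rw [Finset.prod_eq_zero (Finset.mem_univ j) h0, mul_zero]
    exact dvd_zero _

theorem hs_smul_sum {E ι' : Type*} [AddCommGroup E] [Module ℝ E] (Γ : Set E) (hc : Convex ℝ Γ)
    (h0 : (0 : E) ∈ Γ) (S : Finset ι') (r : ι' → ℝ) (hr : ∀ i, 0 ≤ r i) (g : ι' → E)
    (hg : ∀ i, g i ∈ Γ) : ∑ i ∈ S, r i • g i ∈ (∑ i ∈ S, r i) • Γ := by
  induction S using Finset.induction_on with
  | empty => simp only [Finset.sum_empty]; exact ⟨0, h0, by simp⟩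
  | insert i S hi ih =>
    rw [Finset.sum_insert hi, Finset.sum_insert hi,
      hc.add_smul (hr i) (Finset.sum_nonneg fun i _ => hr i)]
    exact Set.add_mem_add (Set.smul_mem_smul_set (hg i)) ih

theorem hs_comb1 {K : Type} [Field K] {n s : ℕ} (f : (Fin n → ℤ) →₀ K)
    (P : ((Fin n → ℤ) × (Fin s → ℤ)) →₀ K)
    (hPnn : ∀ gm ∈ P.support, ∀ j, (0 : ℤ) ≤ gm.2 j)
    (hwt : ∀ gm ∈ P.support, gauge (NewtonPoly f) (toR gm.1) < 1)
    (hwne : ∃ u : Fin s → ℤ, (∀ i, (1 : ℤ) ≤ u i) ∧ toR u ∈ coneOf (relPoly f P))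
    (r : P.support → ℝ) (hr : ∀ i, 0 ≤ r i) (v : Fin s → ℕ)
    (hv : ∀ j, ∑ i, r i * ((i.1.2 j).toNat : ℝ) = v j) :
    wMin (relPoly f P) ≤ ∑ i, r i + ((Finset.univ.filter fun j => v j = 0).card : ℝ) := by
  have hcv : Convex ℝ (relPoly f P) := convex_convexHull _ _
  have h0 : (0 : Fin s → ℝ) ∈ relPoly f P := subset_convexHull _ _ (Set.mem_insert _ _)
  have hmem : ∀ i : P.support, toR i.1.2 ∈ relPoly f P := by
    intro i
    have hw := hwt i.1 i.2
    have hw0 : 0 ≤ gauge (NewtonPoly f) (toR i.1.1) := gauge_nonneg _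
    set w := gauge (NewtonPoly f) (toR i.1.1) with hwdef
    have hm : (1 - w)⁻¹ • toR i.1.2 ∈ relPoly f P :=
      subset_convexHull _ _ (Set.mem_insert_of_mem _ ⟨i.1, i.2, rfl⟩)
    have := hcv hm h0 (a := 1 - w) (b := w) (by linarith) hw0 (by ring)
    rwa [smul_zero, add_zero, smul_smul, mul_inv_cancel₀ (by linarith), one_smul] at this
  have hex : ∀ j, ∃ i : P.support, 1 ≤ i.1.2 j := by
    intro j
    by_contra hcon
    push Not at hcon
    obtain ⟨u, hu1, c, hc, g, hg, hug⟩ := hwne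
    have hz : relPoly f P ⊆ {x | x j = 0} := by
      refine convexHull_min ?_ ?_
      · rintro x (rfl | ⟨gm, hgm, rfl⟩)
        · simp
        · have h1 := hPnn gm hgm j
          have h2 := hcon ⟨gm, hgm⟩
          have h3 : gm.2 j = 0 := by simp only at h2; omega
          simp [toR, h3]
      · intro x hx y hy a b _ _ _
        simp only [Set.mem_ofPred_eq] at hx hy ⊢
        simp [hx, hy]
    have h1 : g j = 0 := hz hg
    have h2 := congrFun hug j
    simp only [toR, Pi.smul_apply, h1, smul_zero, Int.cast_eq_zero] at h2
    have := hu1 j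
    omega
  choose ij hij using hex
  set J := Finset.univ.filter fun j => v j = 0 with hJ
  let u : Fin s → ℤ := fun l => v l + ∑ j ∈ J, (ij j).1.2 l
  have hu : toR u = ∑ i, r i • toR i.1.2 + ∑ j ∈ J, (1 : ℝ) • toR (ij j).1.2 := by
    ext l
    simp only [toR, u, Pi.add_apply, Finset.sum_apply, Pi.smul_apply, smul_eq_mul, one_mul]
    push_cast
    rw [← hv l]
    congr 1
    refine Finset.sum_congr rfl fun i _ => ?_
    have : (((i.1.2 l).toNat : ℤ) : ℝ) = (i.1.2 l : ℝ) := by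
      rw [Int.toNat_of_nonneg (hPnn _ i.2 l)]
    rw [← this, Int.cast_natCast]
  have hu1 : ∀ l, 1 ≤ u l := by
    intro l
    have hnn : ∀ j ∈ J, 0 ≤ (ij j).1.2 l := fun j _ => hPnn _ (ij j).2 l
    by_cases hl : v l = 0
    · have hlJ : l ∈ J := by simp [hJ, hl]
      have h1 := Finset.single_le_sum hnn hlJ
      have h2 := hij l
      simp only [u]; omega
    · have := Finset.sum_nonneg hnn
      simp only [u]; omega
  have hmemu : toR u ∈ (∑ i, r i + (J.card : ℝ)) • relPoly f P := by
    rw [hu, hcv.add_smul (Finset.sum_nonneg fun i _ => hr i) (Nat.cast_nonneg _)]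
    refine Set.add_mem_add (hs_smul_sum _ hcv h0 _ _ hr _ hmem) ?_
    have := hs_smul_sum _ hcv h0 J (fun _ => (1 : ℝ)) (fun _ => zero_le_one)
      (fun j => toR (ij j).1.2) (fun j => hmem _)
    simpa using this
  have hR : 0 ≤ ∑ i, r i + (J.card : ℝ) :=
    add_nonneg (Finset.sum_nonneg fun i _ => hr i) (Nat.cast_nonneg _)
  refine le_trans (csInf_le ⟨0, ?_⟩ ⟨u, hu1, ?_, rfl⟩) (gauge_le_of_mem hR hmemu)
  · rintro x ⟨_, _, _, rfl⟩; exact gauge_nonneg _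
  · obtain ⟨g, hg, hgu⟩ := hmemu
    exact ⟨_, hR, g, hg, hgu.symm⟩

/-- digit shift -/
def hsSh (p d l r : ℕ) : ℕ := ∑ j ∈ Finset.range d, (r / p ^ j % p) * p ^ ((j + l) % d)

theorem hs_rot (d : ℕ) (g : ℕ → ℕ) (j : ℕ) :
    ∑ l ∈ Finset.range d, g ((j + l) % d) = ∑ l ∈ Finset.range d, g l := by
  induction j with
  | zero =>
    refine Finset.sum_congr rfl fun l hl => ?_
    rw [zero_add, Nat.mod_eq_of_lt (Finset.mem_range.1 hl)]
  | succ j ih =>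
    have h1 := Finset.sum_range_succ (fun l => g ((j + l) % d)) d
    have h2 := Finset.sum_range_succ' (fun l => g ((j + l) % d)) d
    simp only [Nat.add_mod_right, add_zero] at h1 h2
    rw [← ih]
    have h3 : ∑ l ∈ Finset.range d, g ((j + 1 + l) % d)
        = ∑ l ∈ Finset.range d, g ((j + (l + 1)) % d) :=
      Finset.sum_congr rfl fun l _ => by congr 2; ring
    omega

theorem hs_digits (p d r : ℕ) (hr : r < p ^ d) :
    ∑ j ∈ Finset.range d, (r / p ^ j % p) * p ^ j = r := by
  have : ∀ d, ∑ j ∈ Finset.range d, (r / p ^ j % p) * p ^ j = r % p ^ d := by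
    intro d
    induction d with
    | zero => simp [Nat.mod_one]
    | succ d ih => rw [Finset.sum_range_succ, ih, Nat.mod_pow_succ, mul_comm (p ^ d)]
  rw [this, Nat.mod_eq_of_lt hr]

theorem hs_sh_sum (p d r : ℕ) (hp : 1 ≤ p) :
    (∑ l ∈ Finset.range d, hsSh p d l r) * (p - 1) = hsS p d r * (p ^ d - 1) := by
  simp only [hsSh]
  rw [Finset.sum_comm]
  simp only [← Finset.mul_sum]
  have : ∀ j, ∑ l ∈ Finset.range d, p ^ ((j + l) % d) = ∑ l ∈ Finset.range d, p ^ l :=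
    fun j => hs_rot d (fun l => p ^ l) j
  simp only [this]
  rw [← Finset.sum_mul, mul_assoc, hsS, geom_sum_mul_of_one_le hp]

theorem hs_sh_mod (p d l r : ℕ) (hp : 1 ≤ p) (hr : r < p ^ d) :
    hsSh p d l r ≡ p ^ l * r [MOD (p ^ d - 1)] := by
  have h1 : p ^ d ≡ 1 [MOD (p ^ d - 1)] := by
    have : 1 ≤ p ^ d := Nat.one_le_pow _ _ hp
    exact ((Nat.modEq_iff_dvd' this).2 dvd_rfl).symm
  have h2 : ∀ e, p ^ (e % d) ≡ p ^ e [MOD (p ^ d - 1)] := by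
    intro e
    conv_rhs => rw [← Nat.mod_add_div e d, pow_add, pow_mul]
    simpa using ((h1.pow (e / d)).mul_left (p ^ (e % d))).symm
  conv_rhs => rw [← hs_digits p d r hr, Finset.mul_sum]
  have h3 : ∀ S : Finset ℕ, ∑ j ∈ S, (r / p ^ j % p) * p ^ ((j + l) % d)
      ≡ ∑ j ∈ S, p ^ l * ((r / p ^ j % p) * p ^ j) [MOD (p ^ d - 1)] := by
    intro S
    induction S using Finset.induction_on with
    | empty => rfl
    | insert j S hj ih =>
      rw [Finset.sum_insert hj, Finset.sum_insert hj]
      refine Nat.ModEq.add ?_ ih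
      have e : p ^ l * ((r / p ^ j % p) * p ^ j) = (r / p ^ j % p) * p ^ (j + l) := by
        rw [pow_add]; ring
      rw [e]
      exact (h2 _).mul_left _
  exact h3 _

theorem hs_sh_zero (p d l r : ℕ) (hp : 1 ≤ p) (hr : r < p ^ d) (h : hsSh p d l r = 0) : r = 0 := by
  rw [← hs_digits p d r hr]
  refine Finset.sum_eq_zero fun j hj => ?_
  have := Finset.sum_eq_zero_iff.1 h j hj
  rcases Nat.mul_eq_zero.1 this with h | h
  · rw [h, zero_mul]
  · exact absurd h (pow_pos hp _).ne'

theorem hs_comb2 {K : Type} [Field K] {n s : ℕ} (f : (Fin n → ℤ) →₀ K)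
    (P : ((Fin n → ℤ) × (Fin s → ℤ)) →₀ K)
    (hPnn : ∀ gm ∈ P.support, ∀ j, (0 : ℤ) ≤ gm.2 j)
    (hwt : ∀ gm ∈ P.support, gauge (NewtonPoly f) (toR gm.1) < 1)
    (hwne : ∃ u : Fin s → ℤ, (∀ i, (1 : ℤ) ≤ u i) ∧ toR u ∈ coneOf (relPoly f P))
    (p d : ℕ) (hp : 2 ≤ p) (hd : 1 ≤ d) (r : P.support → ℕ) (hr : ∀ i, r i < p ^ d)
    (hdv : ∀ j, (p ^ d - 1) ∣ ∑ i, r i * (i.1.2 j).toNat) :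
    (d * (p - 1) : ℝ) * wMin (relPoly f P) ≤ ((∑ i, hsS p d (r i) +
        d * (p - 1) * (Finset.univ.filter fun j => ∑ i, r i * (i.1.2 j).toNat = 0).card : ℕ) : ℝ) := by
  have hQ : 2 ≤ p ^ d := by
    calc 2 ≤ p := hp
      _ = p ^ 1 := (pow_one p).symm
      _ ≤ p ^ d := Nat.pow_le_pow_right (by omega) hd
  have hQ1 : (0 : ℝ) < ((p ^ d - 1 : ℕ) : ℝ) := by exact_mod_cast (by omega : 0 < p ^ d - 1)
  have hp1 : ((p - 1 : ℕ) : ℝ) = (p : ℝ) - 1 := by rw [Nat.cast_sub (by omega)]; simp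
  have hp0 : (0 : ℝ) < (p : ℝ) - 1 := by rw [← hp1]; exact_mod_cast (by omega : 0 < p - 1)
  set c := (Finset.univ.filter fun j => ∑ i, r i * (i.1.2 j).toNat = 0).card with hc
  have hl : ∀ l, wMin (relPoly f P) ≤
      (∑ i, (hsSh p d l (r i) : ℝ)) / ((p ^ d - 1 : ℕ) : ℝ) + c := by
    intro l
    have hdvl : ∀ j, (p ^ d - 1) ∣ ∑ i, hsSh p d l (r i) * (i.1.2 j).toNat := by
      intro j
      have h1 : ∀ S : Finset P.support, ∑ i ∈ S, hsSh p d l (r i) * (i.1.2 j).toNat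
          ≡ p ^ l * ∑ i ∈ S, r i * (i.1.2 j).toNat [MOD (p ^ d - 1)] := by
        intro S
        induction S using Finset.induction_on with
        | empty => rfl
        | insert i S hi ih =>
          rw [Finset.sum_insert hi, Finset.sum_insert hi, mul_add, ← mul_assoc]
          exact ((hs_sh_mod p d l (r i) (by omega) (hr i)).mul_right _).add ih
      exact ((h1 Finset.univ).dvd_iff dvd_rfl).2 (Dvd.dvd.mul_left (hdv j) _)
    choose v hv using hdvl
    have := hs_comb1 f P hPnn hwt hwne
      (fun i => (hsSh p d l (r i) : ℝ) / ((p ^ d - 1 : ℕ) : ℝ)) (fun i => by positivity) v (by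
        intro j
        have h1 : ((∑ i, hsSh p d l (r i) * (i.1.2 j).toNat : ℕ) : ℝ)
          = ((p ^ d - 1 : ℕ) : ℝ) * v j := by rw [hv j, Nat.cast_mul]
        have h2 : (v j : ℝ) = (((p ^ d - 1 : ℕ) : ℝ) * v j) / ((p ^ d - 1 : ℕ) : ℝ) := by
          field_simp
        rw [h2, ← h1, Nat.cast_sum, Finset.sum_div]
        refine Finset.sum_congr rfl fun i _ => ?_
        rw [Nat.cast_mul]; ring)
    refine this.trans ?_
    rw [Finset.sum_div]
    refine add_le_add le_rfl ?_
    rw [hc]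
    refine Nat.cast_le.2 (Finset.card_le_card ?_)
    intro j hj
    simp only [Finset.mem_filter, Finset.mem_univ, true_and] at hj ⊢
    have h1 := hv j
    rw [hj, mul_zero] at h1
    refine Finset.sum_eq_zero fun i hi => ?_
    rcases Nat.mul_eq_zero.1 (Finset.sum_eq_zero_iff.1 h1 i hi) with h | h
    · rw [hs_sh_zero p d l (r i) (by omega) (hr i) h, zero_mul]
    · rw [h, mul_zero]
  have hsum := Finset.sum_le_sum fun l (_ : l ∈ Finset.range d) => hl l
  rw [Finset.sum_const, Finset.sum_add_distrib, Finset.sum_const, Finset.card_range,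
    nsmul_eq_mul, nsmul_eq_mul, ← Finset.sum_div, Finset.sum_comm] at hsum
  have hk : (∑ i, ∑ l ∈ Finset.range d, (hsSh p d l (r i) : ℝ)) * ((p : ℝ) - 1)
      = ((∑ i, hsS p d (r i) : ℕ) : ℝ) * ((p ^ d - 1 : ℕ) : ℝ) := by
    rw [Nat.cast_sum, Finset.sum_mul, Finset.sum_mul]
    refine Finset.sum_congr rfl fun i _ => ?_
    have := hs_sh_sum p d (r i) (by omega)
    rw [← hp1]
    exact_mod_cast this
  have hk2 : (∑ i, ∑ l ∈ Finset.range d, (hsSh p d l (r i) : ℝ)) / ((p ^ d - 1 : ℕ) : ℝ)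
      * ((p : ℝ) - 1) = ((∑ i, hsS p d (r i) : ℕ) : ℝ) := by
    rw [div_mul_eq_mul_div, hk]; field_simp
  rw [Nat.cast_add, ← hk2, Nat.cast_mul, Nat.cast_mul, hp1]
  nlinarith [mul_le_mul_of_nonneg_right hsum hp0.le]

theorem hs_algClosed (V : ValuationSubring ℂ) : IsAlgClosed (IsLocalRing.ResidueField V) := by
  apply IsAlgClosed.of_exists_root
  intro q hq hirr
  obtain ⟨Q, hQ, hdeg, hmon⟩ := Polynomial.lifts_and_natDegree_eq_and_monic
    (f := IsLocalRing.residue V) (p := q)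
    ((Polynomial.mem_lifts _).2 (Polynomial.map_surjective _ IsLocalRing.residue_surjective q)) hq
  have hd : (Q.map (algebraMap V ℂ)).degree ≠ 0 := by
    rw [hmon.degree_map]
    intro h
    have h1 : Q.natDegree = 0 := Polynomial.natDegree_eq_of_degree_eq_some h
    rw [hdeg] at h1
    exact absurd h1 hirr.natDegree_pos.ne'
  obtain ⟨z, hz⟩ := IsAlgClosed.exists_root _ hd
  have hint : IsIntegral V z := ⟨Q, hmon, by
    rwa [Polynomial.IsRoot.def, Polynomial.eval_map] at hz⟩
  obtain ⟨y, hy⟩ := IsIntegrallyClosed.isIntegral_iff.1 hint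
  refine ⟨IsLocalRing.residue V y, ?_⟩
  rw [← hQ, Polynomial.eval_map, Polynomial.eval₂_at_apply]
  have : Q.eval y = 0 := by
    apply FaithfulSMul.algebraMap_injective V ℂ
    rw [map_zero, ← Polynomial.eval₂_at_apply, hy]
    rwa [Polynomial.IsRoot.def, Polynomial.eval_map] at hz
  rw [this, map_zero]

theorem hs_teich (V : ValuationSubring ℂ) {F : Type} [Field F] [Fintype F]
    (ι : F →+* IsLocalRing.ResidueField V) :
    ∃ ω : F →*₀ V, ∀ y, IsLocalRing.residue V (ω y) = ι y := by
  obtain ⟨g, hg⟩ := IsCyclic.exists_generator (α := Fˣ)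
  set N := Fintype.card Fˣ with hN
  have hNpos : 0 < N := Fintype.card_pos
  obtain ⟨z, hz⟩ : ∃ z : ℂ, IsPrimitiveRoot z N := ⟨_, Complex.isPrimitiveRoot_exp N hNpos.ne'⟩
  have hint : IsIntegral V z := ⟨Polynomial.X ^ N - Polynomial.C 1,
    Polynomial.monic_X_pow_sub_C _ hNpos.ne', by simp [hz.pow_eq_one]⟩
  obtain ⟨y, hy⟩ := IsIntegrallyClosed.isIntegral_iff.1 hint
  have hyp : IsPrimitiveRoot y N := by
    rw [← hy] at hz
    exact hz.of_map_of_injective (FaithfulSMul.algebraMap_injective V ℂ)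
  have hprod := Polynomial.X_pow_sub_one_eq_prod hNpos hyp
  have h2 := congrArg (Polynomial.eval₂ (IsLocalRing.residue V) (ι (g : F))) hprod
  rw [Polynomial.eval₂_finsetProd] at h2
  simp only [Polynomial.eval₂_sub, Polynomial.eval₂_pow, Polynomial.eval₂_X, Polynomial.eval₂_one,
    Polynomial.eval₂_C] at h2
  have hgN : (g : F) ^ N = 1 := by
    rw [← Units.val_pow_eq_pow_val, hN, pow_card_eq_one, Units.val_one]
  rw [← map_pow, hgN, map_one, sub_self, eq_comm, Finset.prod_eq_zero_iff] at h2
  obtain ⟨ξ, hξ, hξg⟩ := h2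
  rw [Polynomial.mem_nthRootsFinset hNpos] at hξ
  have hu : IsUnit ξ := IsUnit.of_pow_eq_one hξ hNpos.ne'
  obtain ⟨ξu, rfl⟩ := hu
  have hroot : ξu ∈ rootsOfUnity (Fintype.card Fˣ) V := by
    rw [mem_rootsOfUnity]; ext; simpa using congrArg Subtype.val hξ
  let χ := MulChar.ofRootOfUnity hroot hg
  refine ⟨χ.toMonoidWithZeroHom, ?_⟩
  intro y
  change IsLocalRing.residue V (χ y) = ι y
  by_cases h0 : y = 0
  · subst h0; rw [MulChar.map_zero, map_zero, map_zero]
  · obtain ⟨i, hi⟩ := (mem_powers_iff_mem_zpowers).2 (hg (Units.mk0 y h0))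
    have hy2 : y = (g : F) ^ i := by
      have := congrArg Units.val hi
      simpa using this.symm
    rw [hy2, map_pow, map_pow, map_pow]
    congr 1
    rw [MulChar.ofRootOfUnity_spec hroot hg]
    exact (sub_eq_zero.1 hξg).symm

theorem hs_power {F V ι' X : Type*} [Field F] [Fintype F] [CommRing V] [Fintype ι'] [Fintype X]
    {s : ℕ} (T n k : ℕ) (ψ : AddChar F V) (π : V) (B : ι' → Fin s → ℕ)
    (H : ∀ b : ι' → F, π ^ T ∣ ∑ t : Fin s → F, ψ (∑ i, b i * ∏ j, t j ^ B i j))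
    (A : X → F) (b : X → ι' → F) :
    π ^ T ∣ ∑ t : Fin s → F, ((-1) ^ n * ∑ x, ψ (A x + ∑ i, b x i * ∏ j, t j ^ B i j)) ^ k := by
  have e : ∀ t : Fin s → F, ((-1) ^ n * ∑ x, ψ (A x + ∑ i, b x i * ∏ j, t j ^ B i j)) ^ k
      = ∑ Y : Fin k → X, ((-1) ^ n) ^ k * (ψ (∑ l, A (Y l)) *
        ψ (∑ i, (∑ l, b (Y l) i) * ∏ j, t j ^ B i j)) := by
    intro t
    rw [mul_pow, Fintype.sum_pow, Finset.mul_sum]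
    refine Finset.sum_congr rfl fun Y _ => ?_
    rw [← hs_char_sum, ← AddChar.map_add_eq_mul, Finset.sum_add_distrib, Finset.sum_comm]
    simp only [Finset.sum_mul]
  simp only [e]
  rw [Finset.sum_comm]
  refine Finset.dvd_sum fun Y _ => ?_
  rw [← Finset.mul_sum, ← Finset.mul_sum]
  exact Dvd.dvd.mul_left (Dvd.dvd.mul_left (H _) _) _

theorem hs_range {p d : ℕ} [Fact p.Prime] {F : Type} [Field F] [Fintype F]
    (hcard : Fintype.card F = p ^ d) (e : F →+* Omg p) (x : Omg p) :
    x ^ p ^ d = x ↔ ∃ y, e y = x := by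
  constructor
  · intro hx
    have hsp := FiniteField.roots_X_pow_card_sub_X F
    have hm : (Polynomial.X ^ Fintype.card F - Polynomial.X : Polynomial F).Monic := by
      apply Polynomial.monic_X_pow_sub
      rw [Polynomial.degree_X]
      exact_mod_cast Fintype.one_lt_card
    have hprod : (Polynomial.X ^ Fintype.card F - Polynomial.X : Polynomial F)
        = ∏ a : F, (Polynomial.X - Polynomial.C a) := by
      have := Polynomial.prod_multiset_X_sub_C_of_monic_of_roots_card_eq hm (by
        rw [hsp, FiniteField.X_pow_card_sub_X_natDegree_eq F Fintype.one_lt_card]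
        simp)
      rw [← this, hsp]; rfl
    have h2 := congrArg (Polynomial.eval₂ e x) hprod
    rw [Polynomial.eval₂_finsetProd] at h2
    simp only [Polynomial.eval₂_sub, Polynomial.eval₂_pow, Polynomial.eval₂_X,
      Polynomial.eval₂_C] at h2
    rw [hcard, hx, sub_self, eq_comm, Finset.prod_eq_zero_iff] at h2
    obtain ⟨a, _, ha⟩ := h2
    exact ⟨a, (sub_eq_zero.1 ha).symm⟩
  · rintro ⟨y, rfl⟩
    rw [← map_pow, ← hcard, FiniteField.pow_card]

theorem hs_trace {p d : ℕ} [Fact p.Prime] {F : Type} [Field F] [Fintype F] [Algebra (ZMod p) F]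
    (hcard : Fintype.card F = p ^ d) (e : F →ₐ[ZMod p] Omg p) (y : F) :
    traceZmod p d (e y) = Algebra.trace (ZMod p) F y := by
  have hfr : Module.finrank (ZMod p) F = d := by
    have := Module.card_eq_pow_finrank (K := ZMod p) (V := F)
    rw [hcard, ZMod.card] at this
    exact (Nat.pow_right_injective (Fact.out : p.Prime).two_le this).symm
  have h := FiniteField.algebraMap_trace_eq_sum_pow (ZMod p) F y
  rw [hfr, Nat.card_zmod] at h
  have h2 : ∑ j ∈ Finset.range d, (e y) ^ p ^ j
      = algebraMap (ZMod p) (Omg p) (Algebra.trace (ZMod p) F y) := by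
    rw [← e.commutes, h, map_sum]; simp only [map_pow]
  rw [traceZmod, h2]
  exact Function.leftInverse_invFun (FaithfulSMul.algebraMap_injective _ _) _

theorem hs_ord (p : ℕ) [Fact p.Prime] (ζ : ℂ) (hζ : IsPrimitiveRoot ζ p)
    (R : Subring ℂ) (hR : R = Subring.closure ({ζ} : Set ℂ))
    (Pid : Ideal R) (hmax : Pid.IsMaximal)
    (hpP : (p : R) ∈ Pid)
    (V : ValuationSubring ℂ) (hRV : R ≤ V.toSubring)
    (hPV : R.subtype '' Pid ⊆ V.nonunits)
    (T : ℕ) (N : R) (hN0 : (N : ℂ) ≠ 0)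
    (hN : ∃ v : V, (N : ℂ) = (ζ - 1) ^ T * v) :
    T ≤ ordSub R Pid N := by
  have hpp := (Fact.out : p.Prime)
  let z : R := ⟨ζ, by rw [hR]; exact Subring.subset_closure rfl⟩
  let π : R := z - 1
  have hz1 : z ^ p = 1 := Subtype.ext hζ.pow_eq_one
  have hπ0 : (ζ - 1 : ℂ) ≠ 0 := sub_ne_zero.2 (hζ.ne_one hpp.one_lt)
  have hsurj : Function.Surjective (Polynomial.aeval (R := ℤ) z) := by
    rintro ⟨x, hx⟩
    have : ∃ q : Polynomial ℤ, Polynomial.aeval ζ q = x := by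
      have hx2 := hx
      rw [hR] at hx2
      clear hx
      induction hx2 using Subring.closure_induction with
      | mem x hx => exact ⟨Polynomial.X, by simp at hx; simp [hx]⟩
      | zero => exact ⟨0, by simp⟩
      | one => exact ⟨1, by simp⟩
      | add x y _ _ hx hy =>
        obtain ⟨a, rfl⟩ := hx; obtain ⟨b, rfl⟩ := hy; exact ⟨a + b, by simp⟩
      | neg x _ hx => obtain ⟨a, rfl⟩ := hx; exact ⟨-a, by simp⟩
      | mul x y _ _ hx hy =>
        obtain ⟨a, rfl⟩ := hx; obtain ⟨b, rfl⟩ := hy; exact ⟨a * b, by simp⟩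
    obtain ⟨q, hq⟩ := this
    refine ⟨q, ?_⟩
    apply Subtype.ext
    change ((Polynomial.aeval z q : R) : ℂ) = x
    rw [← hq]
    have := Polynomial.aeval_algHom_apply (R.subtype.toIntAlgHom) z q
    exact this.symm
  have hnoeth : IsNoetherianRing R :=
    isNoetherianRing_of_surjective _ _ (Polynomial.aeval (R := ℤ) z).toRingHom hsurj
  -- every element is an integer mod π
  have hint : ∀ x : R, ∃ c : ℤ, π ∣ x - c := by
    intro x
    obtain ⟨q, rfl⟩ := hsurj x
    refine ⟨q.eval 1, ?_⟩
    have h := Polynomial.sub_dvd_eval_sub z 1 (q.map (Int.castRingHom R))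
    rw [Polynomial.eval_map, Polynomial.eval_map] at h
    have h2 : Polynomial.eval₂ (Int.castRingHom R) 1 q = ((q.eval 1 : ℤ) : R) := by
      have := Polynomial.eval₂_at_apply (p := q) (Int.castRingHom R) 1
      rw [map_one] at this
      rw [this]; rfl
    rw [h2] at h
    exact h
  have hpdvd : π ∣ (p : R) := by
    have hs : ∑ i ∈ Finset.range p, z ^ i = 0 := by
      apply Subtype.ext
      have := hζ.geom_sum_eq_zero hpp.one_lt
      push_cast
      exact this
    have : (p : R) = - ∑ i ∈ Finset.range p, (z ^ i - 1) := by
      rw [Finset.sum_sub_distrib, hs]; simp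
    rw [this]
    refine (dvd_neg).2 (Finset.dvd_sum fun i _ => ?_)
    simpa using sub_dvd_pow_sub_pow z 1 i
  have hπP : π ∈ Pid := by
    have := hmax.isPrime
    apply this.mem_of_pow_mem p
    have h1 : (p : R) ∣ π ^ p := by
      have : ∃ r : R, (z - 1 + 1) ^ p = (z - 1) ^ p + 1 ^ p + p * r := by
        obtain ⟨r, hr⟩ := exists_add_pow_prime_eq hpp (z - 1) 1
        exact ⟨(z - 1) * 1 * r, by rw [hr]; ring⟩
      obtain ⟨r, hr⟩ := this
      rw [sub_add_cancel, hz1, one_pow] at hr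
      exact ⟨-r, by simp only [π]; linear_combination -hr⟩
    exact Ideal.mem_of_dvd _ h1 hpP
  have hPspan : Pid = Ideal.span {π} := by
    apply le_antisymm
    · intro x hx
      obtain ⟨c, hc⟩ := hint x
      rw [Ideal.mem_span_singleton]
      have hcP : (c : R) ∈ Pid := by
        have := Pid.sub_mem hx (Ideal.mem_of_dvd _ hc hπP)
        simpa using this
      have hpc : (p : ℤ) ∣ c := by
        by_contra hnd
        have hcop : IsCoprime (p : ℤ) c :=
          ((Nat.prime_iff_prime_int.1 hpp).coprime_iff_not_dvd).2 hnd
        obtain ⟨a, b, hab⟩ := hcop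
        apply hmax.ne_top
        rw [Ideal.eq_top_iff_one]
        have : (1 : R) = (a : R) * (p : R) + (b : R) * (c : R) := by
          exact_mod_cast congrArg (Int.cast : ℤ → R) hab.symm
        rw [this]
        exact Pid.add_mem (Pid.mul_mem_left _ hpP) (Pid.mul_mem_left _ hcP)
      obtain ⟨c', rfl⟩ := hpc
      have h3 : π ∣ ((p * c' : ℤ) : R) := by
        push_cast; exact Dvd.dvd.mul_right hpdvd _
      have := dvd_add hc h3
      simpa using this
    · rw [Ideal.span_le]; simpa using hπP
  have hmem : ∀ t, N ∈ Pid ^ t ↔ π ^ t ∣ N := by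
    intro t
    rw [hPspan, Ideal.span_singleton_pow, Ideal.mem_span_singleton]
  have hbot := Ideal.iInf_pow_eq_bot_of_isDomain Pid hmax.ne_top
  have hNP : ∃ t0, N ∉ Pid ^ t0 := by
    by_contra hcon
    push Not at hcon
    have : N ∈ ⨅ i : ℕ, Pid ^ i := by rw [Ideal.mem_iInf]; exact hcon
    rw [hbot] at this
    exact hN0 (by rw [Ideal.mem_bot.1 this]; rfl)
  have hset : ∀ t, (∃ y : R, (y : ℂ) = N ∧ y ∈ Pid ^ t) ↔ N ∈ Pid ^ t := by
    intro t
    constructor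
    · rintro ⟨y, hy, hyt⟩
      rwa [← Subtype.ext hy]
    · intro h; exact ⟨N, rfl, h⟩
  have hNT : N ∈ Pid ^ T := by
    -- largest power
    let j := Nat.findGreatest (fun t => N ∈ Pid ^ t) T
    have hj : N ∈ Pid ^ j := Nat.findGreatest_spec (P := fun t => N ∈ Pid ^ t) (Nat.zero_le T)
      (by simp)
    have hjT : j ≤ T := Nat.findGreatest_le T
    rcases hjT.eq_or_lt with h | h
    · rw [← h]; exact hj
    exfalso
    have hj1 : N ∉ Pid ^ (j + 1) :=
      Nat.findGreatest_is_greatest (P := fun t => N ∈ Pid ^ t) (Nat.lt_succ_self j) h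
    obtain ⟨u, hu⟩ := (hmem j).1 hj
    obtain ⟨v, hv⟩ := hN
    have huv : (u : ℂ) = (ζ - 1) * ((ζ - 1) ^ (T - j - 1) * v) := by
      have h1 : (N : ℂ) = (ζ - 1) ^ j * u := by rw [hu]; rfl
      rw [h1] at hv
      have h2 : (ζ - 1) ^ T = (ζ - 1) ^ j * ((ζ - 1) * (ζ - 1) ^ (T - j - 1)) := by
        rw [← pow_succ', ← pow_add]; congr 1; omega
      rw [h2, mul_assoc] at hv
      have := mul_left_cancel₀ (pow_ne_zero j hπ0) hv
      rw [this, mul_assoc]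
    have huP : u ∉ Pid := by
      intro hup
      rw [hPspan, Ideal.mem_span_singleton] at hup
      obtain ⟨u', rfl⟩ := hup
      apply hj1
      rw [hmem]
      exact ⟨u', by rw [hu]; ring⟩
    obtain ⟨w, i, hi, hwi⟩ := hmax.exists_inv huP
    have hone : (w : ℂ) * u + i = 1 := by
      have := congrArg (Subtype.val) hwi
      exact this
    have hiV : (i : ℂ) ∈ V.nonunits := hPV ⟨i, hi, rfl⟩
    have hπV : (ζ - 1 : ℂ) ∈ V.nonunits := hPV ⟨π, hπP, rfl⟩
    rw [ValuationSubring.mem_nonunits_iff] at hiV hπV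
    have hwV : (w : ℂ) ∈ V := hRV w.2
    have hzV : (ζ - 1 : ℂ) ∈ V := hRV π.2
    have huV : V.valuation ((w : ℂ) * u) < 1 := by
      rw [huv]
      have e : (w : ℂ) * ((ζ - 1) * ((ζ - 1) ^ (T - j - 1) * v))
        = (ζ - 1) * ((w : ℂ) * ((ζ - 1) ^ (T - j - 1) * v)) := by ring
      rw [e, map_mul]
      have hle : V.valuation ((w : ℂ) * ((ζ - 1) ^ (T - j - 1) * v)) ≤ 1 :=
        (V.valuation_le_one_iff _).2 (V.mul_mem _ _ hwV (V.mul_mem _ _ (pow_mem hzV _) v.2))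
      exact mul_lt_one_of_lt_of_le hπV hle
    have := V.valuation.map_add_lt huV hiV
    rw [hone, map_one] at this
    exact lt_irrefl _ this
  obtain ⟨t0, ht0⟩ := hNP
  rw [ordSub]
  apply le_csSup
  · refine ⟨t0, ?_⟩
    intro t ht
    have ht' := (hset t).1 ht
    by_contra hlt
    push Not at hlt
    exact ht0 (Ideal.pow_le_pow_right hlt.le ht')
  · exact (hset T).2 hNT

theorem hs_mon {K L : Type} [Field K] [Field L] (e : K →+* L) {n : ℕ} (x : Fin n → K)
    (μ : Fin n → ℤ) : mon (fun i => e (x i)) μ = e (mon x μ) := by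
  simp only [mon, map_prod, map_zpow₀]

theorem hs_gval {K L : Type} [Field K] [Field L] (e : K →+* L) {n s : ℕ}
    (f : (Fin n → ℤ) →₀ L) (P : ((Fin n → ℤ) × (Fin s → ℤ)) →₀ L)
    (hPnn : ∀ gm ∈ P.support, ∀ j, (0 : ℤ) ≤ gm.2 j)
    (fc : (Fin n → ℤ) → K) (hfc : ∀ μ, e (fc μ) = f μ)
    (Pc : ((Fin n → ℤ) × (Fin s → ℤ)) → K) (hPc : ∀ gm, e (Pc gm) = P gm)
    (x : Fin n → K) (t : Fin s → K) :
    Gval f P (fun i => e (x i)) (fun j => e (t j)) =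
      e ((∑ μ ∈ f.support, fc μ * mon x μ) +
        ∑ i : P.support, (Pc i.1 * mon x i.1.1) * ∏ j, t j ^ (i.1.2 j).toNat) := by
  rw [Gval, map_add]
  congr 1
  · rw [Finsupp.sum, map_sum]
    refine Finset.sum_congr rfl fun μ _ => ?_
    rw [map_mul, hfc, hs_mon]
  · rw [Finsupp.sum, map_sum, ← Finset.sum_coe_sort]
    refine Finset.sum_congr rfl fun i _ => ?_
    rw [map_mul, map_mul, hPc, hs_mon, hs_mon]
    congr 2
    rw [mon]
    refine Finset.prod_congr rfl fun j _ => ?_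
    rw [← zpow_natCast, Int.toNat_of_nonneg (hPnn _ i.2 j)]

theorem hs_naff {p a m n s : ℕ} (k : ℕ) [Fact p.Prime] {F : Type} [Field F] [Fintype F]
    [Algebra (ZMod p) F] (hcard : Fintype.card F = p ^ (a * m)) (e : F →ₐ[ZMod p] Omg p)
    (Θ : AddChar (ZMod p) ℂ)
    (f : (Fin n → ℤ) →₀ Omg p) (P : ((Fin n → ℤ) × (Fin s → ℤ)) →₀ Omg p)
    (hPnn : ∀ gm ∈ P.support, ∀ j, (0 : ℤ) ≤ gm.2 j)
    (fc : (Fin n → ℤ) → F) (hfc : ∀ μ, e (fc μ) = f μ)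
    (Pc : ((Fin n → ℤ) × (Fin s → ℤ)) → F) (hPc : ∀ gm, e (Pc gm) = P gm) :
    Naff p a Θ f P k m = ∑ t : Fin s → F, ((-1) ^ n * ∑ x : Fin n → Fˣ,
      Θ (Algebra.trace (ZMod p) F ((∑ μ ∈ f.support, fc μ * mon (fun i => (x i : F)) μ) +
        ∑ i : P.support, (Pc i.1 * mon (fun i => (x i : F)) i.1.1) *
          ∏ j, t j ^ (i.1.2 j).toNat))) ^ k := by
  have hinj : Function.Injective e := e.toRingHom.injective
  have hS : {t : Fin s → Omg p | ∀ j, t j ^ p ^ (a * m) = t j} =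
      Set.range (fun (t : Fin s → F) (j : Fin s) => e (t j)) := by
    ext t
    simp only [Set.mem_ofPred_eq, Set.mem_range]
    constructor
    · intro h
      choose y hy using fun j => (hs_range hcard e.toRingHom (t j)).1 (h j)
      exact ⟨y, funext hy⟩
    · rintro ⟨y, rfl⟩ j
      exact (hs_range hcard e.toRingHom _).2 ⟨y j, rfl⟩
  have hX : {x : Fin n → Omg p | ∀ i, x i ^ p ^ (a * m) = x i ∧ x i ≠ 0} =
      Set.range (fun (x : Fin n → Fˣ) (i : Fin n) => e (x i : F)) := by
    ext x
    simp only [Set.mem_ofPred_eq, Set.mem_range]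
    constructor
    · intro h
      choose y hy using fun j => (hs_range hcard e.toRingHom (x j)).1 (h j).1
      refine ⟨fun i => Units.mk0 (y i) ?_, funext hy⟩
      intro h0
      apply (h i).2
      rw [← hy i, h0, map_zero]
    · rintro ⟨y, rfl⟩ j
      exact ⟨(hs_range hcard e.toRingHom _).2 ⟨y j, rfl⟩, by simp⟩
  have hSi : Function.Injective (fun (t : Fin s → F) (j : Fin s) => e (t j)) :=
    fun t u h => funext fun j => hinj (congrFun h j)
  have hXi : Function.Injective (fun (x : Fin n → Fˣ) (i : Fin n) => e (x i : F)) :=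
    fun t u h => funext fun j => Units.ext (hinj (congrFun h j))
  have h1 : Naff p a Θ f P k m = ∑ᶠ t ∈ {t : Fin s → Omg p | ∀ j, t j ^ p ^ (a * m) = t j},
    ((-1 : ℂ) ^ n * torSum p Θ f P (a * m) t) ^ k := rfl
  rw [h1, hS, finsum_mem_range hSi, finsum_eq_sum_of_fintype]
  refine Finset.sum_congr rfl fun t _ => ?_
  congr 2
  have h2 : torSum p Θ f P (a * m) (fun j => e (t j)) =
    ∑ᶠ x ∈ {x : Fin n → Omg p | ∀ i, x i ^ p ^ (a * m) = x i ∧ x i ≠ 0},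
      Θ (traceZmod p (a * m) (Gval f P x (fun j => e (t j)))) := rfl
  rw [h2, hX, finsum_mem_range hXi, finsum_eq_sum_of_fintype]
  refine Finset.sum_congr rfl fun x _ => ?_
  rw [← hs_trace hcard e]
  congr 2
  exact hs_gval e.toRingHom f P hPnn fc hfc Pc hPc (fun i => (x i : F)) t

theorem hs_iter {K : Type} [Field K] (q : ℕ) (x : K) (h : x ^ q = x) (m : ℕ) :
    x ^ q ^ m = x := by
  induction m with
  | zero => simp
  | succ m ih => rw [pow_succ, pow_mul, ih, h]

theorem hs_pi {V : Type*} [CommRing V] [IsDomain V] (p : ℕ) (hp : p.Prime) (z : V)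
    (hz : IsPrimitiveRoot z p) : (z - 1) ^ (p - 1) ∣ (p : V) := by
  obtain ⟨q, rfl⟩ : ∃ q, p = q + 1 := ⟨p - 1, by have := hp.pos; omega⟩
  have := hz.prod_one_sub_pow_eq_order
  rw [Nat.cast_succ, ← this, Nat.add_sub_cancel]
  have h2 : (z - 1) ^ q = ∏ i ∈ Finset.range q, (z - 1) := by simp
  rw [h2]
  refine Finset.prod_dvd_prod_of_dvd _ _ fun i _ => ?_
  rw [← neg_sub, neg_dvd]
  simpa using sub_dvd_pow_sub_pow 1 z (i + 1)

/-- `p`-adic divisibility of the moment sums over the affine base: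
`N_m ∈ ℤ[ζ_p]` and `ord_q(N_m) ≥ m·w(Γ)` for the maximal ideal `𝔭` of `ℤ[ζ_p]` over `p`,
where `ord_q = v_𝔭/((p-1)·a)` (with `ord_q 0 = +∞`, rendered as a disjunction). -/
theorem tensor_power_affine_moment_divisibility
    (p a n s k : ℕ) [Fact p.Prime] (ha : 1 ≤ a) (hn : 1 ≤ n) (hs : 1 ≤ s) (hk : 1 ≤ k)
    (ζ : ℂ) (hζ : IsPrimitiveRoot ζ p)
    (Θ : AddChar (ZMod p) ℂ) (hΘ : Θ ≠ 1) (hΘval : ∀ z, Θ z ∈ cyclo ζ)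
    (f : (Fin n → ℤ) →₀ Omg p) (hf : ∀ μ, f μ ^ p ^ a = f μ)
    (P : ((Fin n → ℤ) × (Fin s → ℤ)) →₀ Omg p) (hP : ∀ gm, P gm ^ p ^ a = P gm)
    (hPnn : ∀ gm ∈ P.support, ∀ j, (0 : ℤ) ≤ gm.2 j)
    (hdim : Submodule.span ℝ (NewtonPoly f) = ⊤)
    (hnd : Nondeg f)
    (hwt : ∀ gm ∈ P.support, gauge (NewtonPoly f) (toR gm.1) < 1)
    (hΓ : relPoly f P ≠ {0})
    (hwne : ∃ u : Fin s → ℤ, (∀ i, (1 : ℤ) ≤ u i) ∧ toR u ∈ coneOf (relPoly f P))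
    (m : ℕ) (hm : 1 ≤ m) :
    Naff p a Θ f P k m ∈ Subring.closure ({ζ} : Set ℂ) ∧
    ∀ Pid : Ideal (Subring.closure ({ζ} : Set ℂ)), Pid.IsMaximal →
      (p : Subring.closure ({ζ} : Set ℂ)) ∈ Pid →
      (Naff p a Θ f P k m = 0 ∨
        (m : ℝ) * wMin (relPoly f P) ≤
          (ordSub (Subring.closure ({ζ} : Set ℂ)) Pid (Naff p a Θ f P k m) : ℝ) /
            (((p : ℝ) - 1) * (a : ℝ))) := by
  have hpp := (Fact.out : p.Prime)
  obtain ⟨R, hR⟩ : ∃ R : Subring ℂ, R = Subring.closure ({ζ} : Set ℂ) := ⟨_, rfl⟩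
  rw [← hR]
  have hd0 : a * m ≠ 0 := Nat.mul_ne_zero (by omega) (by omega)
  let F := GaloisField p (a * m)
  letI : Fintype F := Fintype.ofFinite F
  have hcard : Fintype.card F = p ^ (a * m) := by
    rw [← Nat.card_eq_fintype_card]; exact GaloisField.card p (a * m) hd0
  let e : F →ₐ[ZMod p] Omg p := IsAlgClosed.lift
  have hlift : ∀ x : Omg p, x ^ p ^ a = x → ∃ y, e y = x := by
    intro x hx
    apply (hs_range hcard e.toRingHom x).1
    rw [pow_mul]
    exact hs_iter _ _ hx m
  choose fc hfc using fun μ => hlift (f μ) (hf μ)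
  choose Pc hPc using fun gm => hlift (P gm) (hP gm)
  have hN := hs_naff k hcard e Θ f P hPnn fc hfc Pc hPc
  have hΘpow : ∀ z, ∃ i : ℕ, Θ z = ζ ^ i := by
    intro z
    have h1 : Θ z ^ p = 1 := by
      rw [← AddChar.map_nsmul_eq_pow]; simp
    obtain ⟨i, -, hi⟩ := hζ.eq_pow_of_pow_eq_one h1
    exact ⟨i, hi.symm⟩
  have hζR : ζ ∈ R := by rw [hR]; exact Subring.subset_closure rfl
  have hNR : Naff p a Θ f P k m ∈ R := by
    rw [hN]
    refine sum_mem fun t _ => pow_mem (mul_mem (pow_mem (neg_mem (one_mem _)) _)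
      (sum_mem fun x _ => ?_)) _
    obtain ⟨i, hi⟩ := hΘpow (Algebra.trace (ZMod p) F
      ((∑ μ ∈ f.support, fc μ * mon (fun i => (x i : F)) μ) +
        ∑ i : P.support, (Pc i.1 * mon (fun i => (x i : F)) i.1.1) *
          ∏ j, t j ^ (i.1.2 j).toNat))
    rw [hi]
    exact pow_mem hζR _
  refine ⟨hNR, ?_⟩
  intro Pid hmax hpP
  by_cases hN0 : Naff p a Θ f P k m = 0
  · exact Or.inl hN0
  right
  obtain ⟨V, hRV, hPV⟩ := Ideal.image_subset_nonunits_valuationSubring Pid hmax.ne_top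
  have hζV : ζ ∈ V := hRV hζR
  let z : V := ⟨ζ, hζV⟩
  have hzp : IsPrimitiveRoot z p := by
    have : IsPrimitiveRoot (algebraMap V ℂ z) p := hζ
    exact this.of_map_of_injective (FaithfulSMul.algebraMap_injective V ℂ)
  have hΘV : ∀ y : F, ∃ i : ℕ, Θ (Algebra.trace (ZMod p) F y) = ζ ^ i := fun y => hΘpow _
  have hΘmem : ∀ y : F, Θ (Algebra.trace (ZMod p) F y) ∈ V := by
    intro y
    obtain ⟨i, hi⟩ := hΘV y
    rw [hi]; exact pow_mem hζV i
  let ψ : AddChar F V :=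
    { toFun := fun y => ⟨Θ (Algebra.trace (ZMod p) F y), hΘmem y⟩
      map_zero_eq_one' := by apply Subtype.ext; simp
      map_add_eq_mul' := by
        intro x y; apply Subtype.ext; simp [AddChar.map_add_eq_mul] }
  have hψc : ∀ y, ((ψ y : V) : ℂ) = Θ (Algebra.trace (ZMod p) F y) := fun y => rfl
  have hψ : ∀ y, z - 1 ∣ ψ y - 1 := by
    intro y
    obtain ⟨i, hi⟩ := hΘV y
    have : ψ y = z ^ i := Subtype.ext (by rw [hψc, hi]; rfl)
    rw [this]
    simpa using sub_dvd_pow_sub_pow z 1 i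
  have hchar : CharP (IsLocalRing.ResidueField V) p := by
    apply (CharP.charP_iff_prime_eq_zero hpp).2
    have h1 : ((p : V) : ℂ) ∈ V.nonunits := hPV ⟨(p : R), hpP, by simp⟩
    rw [ValuationSubring.coe_mem_nonunits_iff] at h1
    rw [← map_natCast (IsLocalRing.residue V), IsLocalRing.residue_eq_zero_iff]
    exact h1
  have hac := hs_algClosed V
  letI : Algebra (ZMod p) (IsLocalRing.ResidueField V) := ZMod.algebra _ p
  let ι : F →ₐ[ZMod p] IsLocalRing.ResidueField V := IsAlgClosed.lift
  obtain ⟨ω, hω⟩ := hs_teich V ι.toRingHom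
  let T : ℕ := ⌈((a * m : ℕ) * (p - 1) : ℝ) * wMin (relPoly f P)⌉₊
  have hdiv := hs_power (X := Fin n → Fˣ) T n k ψ (z - 1)
    (fun (i : P.support) j => (i.1.2 j).toNat)
    (hs_tsum p (a * m) T (Nat.pos_of_ne_zero hd0) hcard (IsLocalRing.residue V)
      (fun x hx => (IsLocalRing.residue_ne_zero_iff_isUnit x).1 hx) ι.toRingHom ω hω ψ (z - 1)
      hψ (hs_pi p hpp z hzp) _ (fun r hr hdv => by
        apply Nat.ceil_le.2
        exact hs_comb2 f P hPnn hwt hwne p (a * m) hpp.two_le (Nat.pos_of_ne_zero hd0) r hr hdv))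
    (fun x => ∑ μ ∈ f.support, fc μ * mon (fun i => (x i : F)) μ)
    (fun x i => Pc i.1 * mon (fun i => (x i : F)) i.1.1)
  obtain ⟨v, hv⟩ := hdiv
  have hT : T ≤ ordSub R Pid (Naff p a Θ f P k m) := by
    refine hs_ord p ζ hζ R hR Pid hmax hpP V hRV hPV T ⟨_, hNR⟩ hN0 ⟨v, ?_⟩
    have h3 := congrArg (algebraMap V ℂ) hv
    change Naff p a Θ f P k m = _
    rw [hN]
    simp only [map_sum, map_pow, map_mul, map_neg, map_one, map_sub] at h3
    exact h3
  have hp1 : (0 : ℝ) < (p : ℝ) - 1 := by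
    have : (1 : ℝ) < p := by exact_mod_cast hpp.one_lt
    linarith
  have ha0 : (0 : ℝ) < a := by exact_mod_cast ha
  rw [le_div_iff₀ (mul_pos hp1 ha0)]
  have h4 : ((a * m : ℕ) * (p - 1) : ℝ) * wMin (relPoly f P) ≤ (T : ℝ) := Nat.le_ceil _
  have h5 : (T : ℝ) ≤ (ordSub R Pid (Naff p a Θ f P k m) : ℝ) := by exact_mod_cast hT
  refine le_trans (le_of_eq ?_) (h4.trans h5)
  push_cast
  ring

end HS
end
end

section
/- Bombieri-type lemma, part 1 (Lemma 2.1(1)): under the stated hypotheses, if the power series D(T) is entire then R ≥ S. -/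
open scoped BigOperators Classical

noncomputable section

namespace HS

/-- `c(m) = binom(m+s-1, s-1)`. -/
def cbin (s m : ℕ) : ℕ := Nat.choose (m + s - 1) (s - 1)

/-- The partial product `∏_{m=0}^{M} (1 - q^m γ T)^{c(m)}` as a power series. -/
def Hpartial {K : Type} [Field K] (s : ℕ) (qK γ : K) (M : ℕ) : PowerSeries K :=
  ∏ m ∈ Finset.range (M + 1),
    (1 - PowerSeries.C (qK ^ m * γ) * PowerSeries.X) ^ cbin s m

/-- Coefficientwise convergence of the partial products `∏_{m=0}^M (1-q^mγT)^{c(m)}`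
to a power series `H`, with respect to the absolute value `v`. -/
def ConvergesTo {K : Type} [Field K] (v : AbsoluteValue K ℝ) (s : ℕ) (qK γ : K)
    (H : PowerSeries K) : Prop :=
  ∀ n : ℕ, ∀ ε : ℝ, 0 < ε → ∃ M0 : ℕ, ∀ M : ℕ, M0 ≤ M →
    v (PowerSeries.coeff n (Hpartial s qK γ M) - PowerSeries.coeff n H) < ε

/-- Completeness of `K` with respect to `v`: every `v`-Cauchy sequence converges. -/
def IsCompleteWrt {K : Type} [Field K] (v : AbsoluteValue K ℝ) : Prop :=
  ∀ g : ℕ → K, (∀ ε : ℝ, 0 < ε → ∃ N, ∀ m₁, N ≤ m₁ → ∀ m₂, N ≤ m₂ → v (g m₁ - g m₂) < ε) →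
    ∃ l : K, ∀ ε : ℝ, 0 < ε → ∃ N, ∀ m₁, N ≤ m₁ → v (g m₁ - l) < ε

/-- `D = ∑ c_n T^n` is entire: `|c_n|·M^n → 0` for every real `M > 0`. -/
def IsEntireWrt {K : Type} [Field K] (v : AbsoluteValue K ℝ) (D : PowerSeries K) : Prop :=
  ∀ M : ℝ, 0 < M → Filter.Tendsto (fun n : ℕ => v (PowerSeries.coeff n D) * M ^ n)
    Filter.atTop (nhds 0)

structure GN {K : Type} [Field K] (v : AbsoluteValue K ℝ) (r : ℝ) (f : PowerSeries K)
    (N : ℕ) (x : ℝ) : Prop where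
  pos : 0 < x
  le : ∀ n, v (PowerSeries.coeff n f) * r ^ n ≤ x
  eq : v (PowerSeries.coeff N f) * r ^ N = x
  lt : ∀ n, n < N → v (PowerSeries.coeff n f) * r ^ n < x

section
variable {K : Type} [Field K] {v : AbsoluteValue K ℝ}

theorem v_sum_lt (hna : ∀ x y : K, v (x + y) ≤ max (v x) (v y)) {ι : Type} (t : Finset ι)
    (f : ι → K) {x : ℝ} (hx : 0 < x) (h : ∀ i ∈ t, v (f i) < x) : v (∑ i ∈ t, f i) < x := by
  induction t using Finset.induction_on with
  | empty => simpa using hx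
  | insert a t ha ih =>
    rw [Finset.sum_insert ha]
    refine lt_of_le_of_lt (hna _ _) (max_lt (h _ (by simp)) (ih fun i hi => h i (by simp [hi])))

theorem v_sum_le (hna : ∀ x y : K, v (x + y) ≤ max (v x) (v y)) {ι : Type} (t : Finset ι)
    (f : ι → K) {x : ℝ} (hx : 0 ≤ x) (h : ∀ i ∈ t, v (f i) ≤ x) : v (∑ i ∈ t, f i) ≤ x := by
  induction t using Finset.induction_on with
  | empty => simpa using hx
  | insert a t ha ih =>
    rw [Finset.sum_insert ha]
    refine (hna _ _).trans (max_le (h _ (by simp)) (ih fun i hi => h i (by simp [hi])))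

theorem v_eq_of_sub_lt (hna : ∀ x y : K, v (x + y) ≤ max (v x) (v y)) {x y : K}
    (h : v (x - y) < v y) : v x = v y := by
  apply le_antisymm
  · have := hna (x - y) y
    rw [sub_add_cancel, max_eq_right h.le] at this
    exact this
  · have := hna (y - x) x
    rw [sub_add_cancel, v.map_sub] at this
    rcases le_max_iff.1 this with h' | h'
    · linarith
    · exact h'

theorem GN.mul (hna : ∀ x y : K, v (x + y) ≤ max (v x) (v y)) {r : ℝ} (hr : 0 < r)
    {f g : PowerSeries K} {N M : ℕ} {x y : ℝ} (hf : GN v r f N x) (hg : GN v r g M y) :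
    GN v r (f * g) (N + M) (x * y) := by
  have hx := hf.pos
  have hy := hg.pos
  have key : ∀ i j : ℕ, v (PowerSeries.coeff i f * PowerSeries.coeff j g) * r ^ (i + j) =
      (v (PowerSeries.coeff i f) * r ^ i) * (v (PowerSeries.coeff j g) * r ^ j) := by
    intro i j; rw [map_mul, pow_add]; ring
  have kle : ∀ i j : ℕ, v (PowerSeries.coeff i f * PowerSeries.coeff j g) * r ^ (i + j) ≤ x * y := by
    intro i j
    rw [key]
    exact mul_le_mul (hf.le i) (hg.le j) (by positivity) hx.le
  have klt : ∀ i j : ℕ, i < N ∨ j < M →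
      v (PowerSeries.coeff i f * PowerSeries.coeff j g) * r ^ (i + j) < x * y := by
    intro i j h
    rw [key]
    have h1 : 0 ≤ v (PowerSeries.coeff i f) * r ^ i := by positivity
    have h2 : 0 ≤ v (PowerSeries.coeff j g) * r ^ j := by positivity
    rcases h with h | h
    · have := hf.lt i h
      have := hg.le j
      nlinarith
    · have := hf.le i
      have := hg.lt j h
      nlinarith
  refine ⟨mul_pos hx hy, ?_, ?_, ?_⟩
  · intro n
    rw [PowerSeries.coeff_mul, ← le_div_iff₀ (pow_pos hr n)]
    apply v_sum_le hna _ _ (by positivity)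
    rintro ⟨i, j⟩ hij
    rw [Finset.HasAntidiagonal.mem_antidiagonal] at hij
    simp only at hij ⊢
    rw [le_div_iff₀ (pow_pos hr n), ← hij]
    exact kle i j
  · have h0 : v (PowerSeries.coeff N f * PowerSeries.coeff M g) * r ^ (N + M) = x * y := by
      rw [key, hf.eq, hg.eq]
    have hmem : (N, M) ∈ Finset.HasAntidiagonal.antidiagonal (N + M) := by
      rw [Finset.HasAntidiagonal.mem_antidiagonal]
    rw [← h0]
    congr 1
    apply v_eq_of_sub_lt hna
    rw [PowerSeries.coeff_mul, ← Finset.add_sum_erase _ _ hmem, add_sub_cancel_left]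
    have h1 : v (PowerSeries.coeff N f * PowerSeries.coeff M g) = x * y / r ^ (N + M) := by
      rw [eq_div_iff (by positivity), h0]
    rw [h1]
    apply v_sum_lt hna _ _ (by positivity)
    rintro ⟨i, j⟩ hij
    rw [Finset.mem_erase, Finset.HasAntidiagonal.mem_antidiagonal] at hij
    obtain ⟨hne, hij⟩ := hij
    simp only at hij ⊢
    rw [lt_div_iff₀ (by positivity), ← hij]
    apply klt
    by_contra hc
    push Not at hc
    apply hne
    rw [Prod.mk.injEq]
    omega
  · intro n hn
    rw [PowerSeries.coeff_mul, ← lt_div_iff₀ (pow_pos hr n)]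
    apply v_sum_lt hna _ _ (by positivity)
    rintro ⟨i, j⟩ hij
    rw [Finset.HasAntidiagonal.mem_antidiagonal] at hij
    simp only at hij ⊢
    rw [lt_div_iff₀ (pow_pos hr n), ← hij]
    apply klt
    omega

theorem GN.one {r : ℝ} : GN v r (1 : PowerSeries K) 0 1 := by
  refine ⟨one_pos, ?_, by simp, by simp⟩
  intro n
  rw [PowerSeries.coeff_one]
  split_ifs with h
  · simp [h]
  · simp

theorem GN.pow (hna : ∀ x y : K, v (x + y) ≤ max (v x) (v y)) {r : ℝ} (hr : 0 < r)
    {f : PowerSeries K} {N : ℕ} {x : ℝ} (hf : GN v r f N x) (k : ℕ) :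
    GN v r (f ^ k) (k * N) (x ^ k) := by
  induction k with
  | zero => simpa using GN.one
  | succ k ih =>
    rw [pow_succ, pow_succ, Nat.succ_mul]
    exact ih.mul hna hr hf

theorem GN.prod (hna : ∀ x y : K, v (x + y) ≤ max (v x) (v y)) {r : ℝ} (hr : 0 < r)
    {ι : Type} (t : Finset ι) {f : ι → PowerSeries K} {N : ι → ℕ} {x : ι → ℝ}
    (hf : ∀ i ∈ t, GN v r (f i) (N i) (x i)) :
    GN v r (∏ i ∈ t, f i) (∑ i ∈ t, N i) (∏ i ∈ t, x i) := by
  induction t using Finset.induction_on with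
  | empty => simpa using GN.one
  | insert a t ha ih =>
    rw [Finset.prod_insert ha, Finset.prod_insert ha, Finset.sum_insert ha]
    exact (hf _ (by simp)).mul hna hr (ih fun i hi => hf i (by simp [hi]))

theorem GN.lin {r : ℝ} (hr : 0 < r) (c : K) :
    GN v r (1 - PowerSeries.C c * PowerSeries.X) (if v c * r ≤ 1 then 0 else 1)
      (max 1 (v c * r)) := by
  have h0 : PowerSeries.coeff 0 (1 - PowerSeries.C c * PowerSeries.X) = 1 := by simp
  have h1 : PowerSeries.coeff 1 (1 - PowerSeries.C c * PowerSeries.X) = -c := by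
    simp [PowerSeries.coeff_one]
  have h2 : ∀ n, PowerSeries.coeff (n + 2) (1 - PowerSeries.C c * PowerSeries.X) = 0 := by
    intro n
    simp [PowerSeries.coeff_one, PowerSeries.coeff_X]
  refine ⟨by positivity, ?_, ?_, ?_⟩
  · intro n
    match n with
    | 0 => rw [h0]; simp
    | 1 => rw [h1]; simp
    | n + 2 => rw [h2]; simp
  · split_ifs with h
    · rw [h0, max_eq_left h]; simp
    · rw [h1, max_eq_right (not_le.1 h).le]; simp
  · intro n hn
    split_ifs at hn with h
    · omega
    · obtain rfl : n = 0 := by omega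
      rw [h0]
      have := not_le.1 h
      simpa using this

theorem GN.Hpartial_tail (hna : ∀ x y : K, v (x + y) ≤ max (v x) (v y)) {r : ℝ} (hr : 0 < r)
    (s : ℕ) (q γ : K) (M₁ : ℕ) (h : ∀ m, M₁ < m → v (q ^ m * γ) * r ≤ 1) :
    ∃ N, ∀ M, M₁ ≤ M → GN v r (Hpartial s q γ M) N
      (∏ m ∈ Finset.range (M₁ + 1), (max 1 (v (q ^ m * γ) * r)) ^ cbin s m) := by
  refine ⟨∑ m ∈ Finset.range (M₁ + 1),
    cbin s m * (if v (q ^ m * γ) * r ≤ 1 then 0 else 1), fun M hM => ?_⟩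
  · induction M, hM using Nat.le_induction with
    | base =>
      exact GN.prod hna hr _ fun m _ => (GN.lin hr (q ^ m * γ)).pow hna hr (cbin s m)
    | succ M hM ih =>
      unfold Hpartial at ih ⊢
      rw [Finset.prod_range_succ _ (M + 1)]
      have h1 := (GN.lin (v := v) hr (q ^ (M + 1) * γ)).pow hna hr (cbin s (M + 1))
      have h2 := h (M + 1) (by omega)
      rw [if_pos h2, max_eq_left h2, one_pow, mul_zero] at h1
      simpa using ih.mul hna hr h1

theorem GN.limit (hna : ∀ x y : K, v (x + y) ≤ max (v x) (v y)) {r : ℝ}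
    (s : ℕ) (q γ : K) (H : PowerSeries K) (hH : ConvergesTo v s q γ H) (M₁ N : ℕ) (x : ℝ)
    (h : ∀ M, M₁ ≤ M → GN v r (Hpartial s q γ M) N x) : GN v r H N x := by
  have hx := (h M₁ le_rfl).pos
  have key : ∀ n, PowerSeries.coeff n H ≠ 0 → ∃ M, M₁ ≤ M ∧
      v (PowerSeries.coeff n (Hpartial s q γ M)) = v (PowerSeries.coeff n H) := by
    intro n hn
    obtain ⟨M0, hM0⟩ := hH n _ (v.pos hn)
    exact ⟨max M0 M₁, le_max_right _ _, v_eq_of_sub_lt hna (hM0 _ (le_max_left _ _))⟩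
  refine ⟨hx, ?_, ?_, ?_⟩
  · intro n
    by_cases hn : PowerSeries.coeff n H = 0
    · rw [hn]; simpa using hx.le
    · obtain ⟨M, hM, he⟩ := key n hn
      rw [← he]; exact (h M hM).le n
  · by_cases hn : PowerSeries.coeff N H = 0
    · exfalso
      have h1 := (h M₁ le_rfl).eq
      have hr : 0 < r ^ N ∨ r ^ N ≤ 0 := lt_or_ge _ _
      have hp : 0 < r ^ N := by
        rcases hr with hr | hr
        · exact hr
        · have := v.nonneg (PowerSeries.coeff N (Hpartial s q γ M₁))
          nlinarith
      obtain ⟨M0, hM0⟩ := hH N (x / r ^ N) (by positivity)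
      have h2 := hM0 _ (le_max_left M0 M₁)
      rw [hn, sub_zero, lt_div_iff₀ hp, (h _ (le_max_right M0 M₁)).eq] at h2
      exact lt_irrefl _ h2
    · obtain ⟨M, hM, he⟩ := key N hn
      rw [← he]; exact (h M hM).eq
  · intro n hnN
    by_cases hn : PowerSeries.coeff n H = 0
    · rw [hn]; simpa using hx
    · obtain ⟨M, hM, he⟩ := key n hn
      rw [← he]; exact (h M hM).lt n hnN

theorem GN.of_tendsto {r : ℝ} (D : PowerSeries K) (h0 : PowerSeries.coeff 0 D ≠ 0)
    (h : Filter.Tendsto (fun n : ℕ => v (PowerSeries.coeff n D) * r ^ n)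
    Filter.atTop (nhds 0)) : ∃ N x, v (PowerSeries.coeff 0 D) ≤ x ∧ GN v r D N x := by
  set u : ℕ → ℝ := fun n : ℕ => v (PowerSeries.coeff n D) * r ^ n with hu
  have hu0 : u 0 = v (PowerSeries.coeff 0 D) := by simp [hu]
  have hpos : 0 < u 0 := by rw [hu0]; exact v.pos h0
  obtain ⟨n0, hn0⟩ := Filter.eventually_atTop.1 (h.eventually (gt_mem_nhds hpos))
  obtain ⟨m, hm, hmax⟩ := Finset.exists_max_image (Finset.range (n0 + 1)) u ⟨0, by simp⟩
  have hm0 : u 0 ≤ u m := hmax 0 (by simp)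
  have hall : ∀ n, u n ≤ u m := by
    intro n
    by_cases hn : n < n0 + 1
    · exact hmax n (by simpa using hn)
    · exact (hn0 n (by omega)).le.trans hm0
  have hex : ∃ n, u n = u m := ⟨m, rfl⟩
  refine ⟨Nat.find hex, u m, hu0 ▸ hm0, hpos.trans_le hm0, hall, Nat.find_spec hex, ?_⟩
  intro n hn
  exact lt_of_le_of_ne (hall n) (Nat.find_min hex hn)

theorem GN.unique {r : ℝ} {f : PowerSeries K} {N M : ℕ} {x y : ℝ} (h : GN v r f N x)
    (h' : GN v r f M y) : x = y :=
  le_antisymm (h.eq ▸ h'.le N) (h'.eq ▸ h.le M)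

end

def FF (s L : ℕ) : ℕ := ∑ m ∈ Finset.range (L + 1), (L - m) * cbin s m

theorem FF_eq (s L M : ℕ) (h : L ≤ M) :
    ∑ m ∈ Finset.range (M + 1), (L - m) * cbin s m = FF s L := by
  unfold FF
  symm
  apply Finset.sum_subset
  · intro i; simp; omega
  · intro i _ hi
    simp at hi
    rw [Nat.sub_eq_zero_of_le (by omega), zero_mul]

theorem FF_le (s L : ℕ) (hL : 1 ≤ L) : FF s L ≤ (s + 2) ^ s * (2 * L ^ (s + 2)) := by
  unfold FF
  have : ∀ m ∈ Finset.range (L + 1), (L - m) * cbin s m ≤ L * ((s + 2) ^ s * L ^ s) := by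
    intro m hm
    simp at hm
    apply Nat.mul_le_mul (by omega)
    unfold cbin
    refine (Nat.choose_le_pow _ _).trans ?_
    rw [← mul_pow]
    have h1 : m + s - 1 ≤ (s + 2) * L := by nlinarith [Nat.sub_le (m + s) 1]
    refine (Nat.pow_le_pow_left h1 _).trans (Nat.pow_le_pow_right (by nlinarith) (by omega))
  refine (Finset.sum_le_card_nsmul _ _ _ this).trans ?_
  simp only [Finset.card_range, smul_eq_mul]
  have : L + 1 ≤ 2 * L := by omega
  calc (L + 1) * (L * ((s + 2) ^ s * L ^ s)) ≤ (2 * L) * (L * ((s + 2) ^ s * L ^ s)) :=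
        Nat.mul_le_mul_right _ this
    _ = _ := by ring

theorem growth (s k R : ℕ) (hk : 1 ≤ k) (hR : 1 ≤ R)
    (h : ∀ L, (R + 1) * FF s L ≤ R * FF s (L + k)) : False := by
  have hF1 : 1 ≤ FF s k := by
    unfold FF
    have : (k - 0) * cbin s 0 ≤ ∑ m ∈ Finset.range (k + 1), (k - m) * cbin s m :=
      Finset.single_le_sum (f := fun m => (k - m) * cbin s m) (fun _ _ => Nat.zero_le _) (by simp)
    have h2 : cbin s 0 = 1 := by simp [cbin]
    rw [h2] at this
    omega
  set c : ℝ := 1 + 1 / R with hc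
  have hR' : (0 : ℝ) < R := by exact_mod_cast hR
  have hc1 : 1 < c := by rw [hc]; have : 0 < 1 / (R : ℝ) := by positivity
                         linarith
  have hstep : ∀ L, c * FF s L ≤ FF s (L + k) := by
    intro L
    have h1 : ((R : ℝ) + 1) * FF s L ≤ R * FF s (L + k) := by exact_mod_cast h L
    have h2 : (R : ℝ) * (c * FF s L) = (R + 1) * FF s L := by rw [hc]; field_simp
    rw [← h2] at h1
    exact le_of_mul_le_mul_left h1 hR'
  have hexp : ∀ n : ℕ, c ^ n ≤ FF s ((n + 1) * k) := by
    intro n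
    induction n with
    | zero => simpa using hF1
    | succ n ih =>
      rw [pow_succ', Nat.succ_mul (n + 1)]
      exact (mul_le_mul_of_nonneg_left ih (by linarith)).trans (hstep _)
  have hpoly : ∀ n : ℕ, c ^ (n + 1) ≤
      c * ((s + 2) ^ s * (2 * k ^ (s + 2))) * ((n + 1 : ℕ) : ℝ) ^ (s + 2) := by
    intro n
    have h1 : (FF s ((n + 1) * k) : ℝ) ≤ (s + 2) ^ s * (2 * ((n + 1 : ℕ) * k) ^ (s + 2)) := by
      exact_mod_cast FF_le s ((n + 1) * k) (by nlinarith)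
    rw [pow_succ']
    have h2 := mul_le_mul_of_nonneg_left ((hexp n).trans h1) (by linarith : 0 ≤ c)
    refine h2.trans (le_of_eq ?_)
    rw [mul_pow]; ring
  have ht := tendsto_pow_const_div_const_pow_of_one_lt (s + 2) hc1
  set C : ℝ := c * ((s + 2) ^ s * (2 * k ^ (s + 2))) with hC
  have hk' : (0 : ℝ) < k := by exact_mod_cast hk
  have hCpos : 0 < C := by positivity
  obtain ⟨n0, hn0⟩ := Filter.eventually_atTop.1 (ht.eventually (gt_mem_nhds (inv_pos.2 hCpos)))
  have h1 := hn0 (n0 + 1) (by omega)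
  have h2 := hpoly n0
  have hcp : 0 < c ^ (n0 + 1) := by positivity
  rw [div_lt_iff₀ hcp] at h1
  have h3 := mul_lt_mul_of_pos_left h1 hCpos
  rw [← mul_assoc, mul_inv_cancel₀ hCpos.ne', one_mul] at h3
  linarith

theorem prod_u (s L M : ℕ) (u : ℝ) (hLM : L ≤ M) :
    ∏ m ∈ Finset.range (M + 1), (u ^ (L - m)) ^ cbin s m = u ^ FF s L := by
  rw [← FF_eq s L M hLM, ← Finset.prod_pow_eq_pow_sum]
  simp only [pow_mul]

theorem max_u (u : ℝ) (hu : 1 < u) (L m : ℕ) : max 1 (u⁻¹ ^ m * u ^ L) = u ^ (L - m) := by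
  have h0 : 0 < u := by linarith
  rw [inv_pow, inv_mul_eq_div]
  rcases le_total m L with h | h
  · have e : u ^ L / u ^ m = u ^ (L - m) := by
      rw [div_eq_iff (by positivity), pow_sub_mul_pow u h]
    rw [e, max_eq_right]
    exact one_le_pow₀ hu.le
  · rw [Nat.sub_eq_zero_of_le h, pow_zero, max_eq_left]
    rw [div_le_one (by positivity)]
    exact pow_le_pow_right₀ hu.le h

/-- Bombieri-type lemma, part 1: if all the `α_i, β_j` are pairwise `q`-related,
`α_i ≠ β_j`, and `D(T) = ∏_i H(α_i) / ∏_j H(β_j)` is entire, then `R ≥ S`. -/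
theorem bombieri_lemma_part1
    (p a s : ℕ) (hp : p.Prime) (ha : 1 ≤ a) (hs : 1 ≤ s)
    (K : Type) [Field K] (v : AbsoluteValue K ℝ)
    (hna : ∀ x y : K, v (x + y) ≤ max (v x) (v y))
    (hres : ∀ r : ℚ, v ((r : K)) = (padicNorm p r : ℝ))
    (hcompl : IsCompleteWrt v)
    (R S : ℕ) (hR : 1 ≤ R) (α : Fin R → K) (β : Fin S → K)
    (hα0 : ∀ i, α i ≠ 0) (hβ0 : ∀ j, β j ≠ 0)
    (hrel : ∀ x ∈ Set.range α ∪ Set.range β, ∀ y ∈ Set.range α ∪ Set.range β,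
      ∃ τ : ℤ, x = ((p : K) ^ a) ^ τ * y)
    (hne : ∀ i j, α i ≠ β j)
    (Hα : Fin R → PowerSeries K) (Hβ : Fin S → PowerSeries K)
    (hHα : ∀ i, ConvergesTo v s ((p : K) ^ a) (α i) (Hα i))
    (hHβ : ∀ j, ConvergesTo v s ((p : K) ^ a) (β j) (Hβ j))
    (D : PowerSeries K)
    (hD : D * ∏ j, Hβ j = ∏ i, Hα i)
    (hent : IsEntireWrt v D) :
    S ≤ R := by
  by_contra hSR
  push Not at hSR
  have hp1 : (1 : ℝ) < p := by exact_mod_cast hp.one_lt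
  have hvp : v (p : K) = (p : ℝ)⁻¹ := by
    have hF := Fact.mk hp
    have := hres (p : ℚ)
    rw [padicNorm.padicNorm_p_of_prime] at this
    simpa using this
  set q : K := (p : K) ^ a with hq
  set u : ℝ := (p : ℝ) ^ a with hu
  have hu1 : 1 < u := one_lt_pow₀ hp1 (by omega)
  have hu0 : 0 < u := by linarith
  have hvq : v q = u⁻¹ := by rw [hq, hu, map_pow, hvp, inv_pow]
  -- bounds
  obtain ⟨b, hb0, hb⟩ : ∃ b : ℝ, 0 < b ∧ ∀ j, b ≤ v (β j) := by
    have : Nonempty (Fin S) := ⟨⟨0, by omega⟩⟩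
    obtain ⟨j, hj⟩ := Finite.exists_min (fun j => v (β j))
    exact ⟨v (β j), v.pos (hβ0 j), hj⟩
  obtain ⟨A, hAα, hAβ⟩ : ∃ A : ℝ, (∀ i, v (α i) ≤ A) ∧ ∀ j, v (β j) ≤ A := by
    refine ⟨∑ i, v (α i) + ∑ j, v (β j), fun i => ?_, fun j => ?_⟩
    · have h1 := Finset.single_le_sum (f := fun i => v (α i)) (fun _ _ => v.nonneg _)
        (Finset.mem_univ i)
      have h2 : 0 ≤ ∑ j, v (β j) := Finset.sum_nonneg fun _ _ => v.nonneg _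
      linarith
    · have h1 := Finset.single_le_sum (f := fun i => v (β i)) (fun _ _ => v.nonneg _)
        (Finset.mem_univ j)
      have h2 : 0 ≤ ∑ j, v (α j) := Finset.sum_nonneg fun _ _ => v.nonneg _
      linarith
  obtain ⟨k, hk1, hk⟩ : ∃ k : ℕ, 1 ≤ k ∧ A / b ≤ u ^ k := by
    obtain ⟨k, hk⟩ := pow_unbounded_of_one_lt (A / b) hu1
    exact ⟨k + 1, by omega, hk.le.trans (pow_le_pow_right₀ hu1.le (by omega))⟩
  -- constant coefficients
  have hconst : ∀ (γ : K) (H : PowerSeries K), ConvergesTo v s q γ H →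
      PowerSeries.coeff 0 H = 1 := by
    intro γ H hH
    have h1 : ∀ M, PowerSeries.coeff 0 (Hpartial s q γ M) = 1 := by
      intro M; simp [Hpartial, map_prod]
    by_contra hc
    have h2 : 0 < v (1 - PowerSeries.coeff 0 H) := v.pos (sub_ne_zero.2 (Ne.symm hc))
    obtain ⟨M, hM⟩ := hH 0 _ h2
    have := hM M le_rfl
    rw [h1] at this
    exact lt_irrefl _ this
  have hD0 : PowerSeries.coeff 0 D = 1 := by
    have h1 := congrArg (PowerSeries.coeff 0) hD
    simp only [PowerSeries.coeff_zero_eq_constantCoeff, map_mul, map_prod] at h1 hconst ⊢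
    rw [Finset.prod_eq_one (fun j _ => hconst _ _ (hHβ j)),
      Finset.prod_eq_one (fun j _ => hconst _ _ (hHα j)), mul_one] at h1
    exact h1
  apply growth s k R hk1 hR
  intro L
  set r : ℝ := u ^ L / b with hr
  have hr0 : 0 < r := by positivity
  have hAr : A * r ≤ u ^ (L + k) := by
    have : A * r = A / b * u ^ L := by rw [hr]; ring
    rw [this, pow_add, mul_comm (u ^ L)]
    exact mul_le_mul_of_nonneg_right hk (by positivity)
  have hbr : b * r = u ^ L := by rw [hr]; field_simp
  have hv : ∀ (m : ℕ) (γ : K), v (q ^ m * γ) * r = u⁻¹ ^ m * (v γ * r) := by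
    intro m γ; rw [map_mul, map_pow, hvq]; ring
  have hup : ∀ (m : ℕ) (γ : K), v γ ≤ A → max 1 (v (q ^ m * γ) * r) ≤ u ^ (L + k - m) := by
    intro m γ hγ
    rw [hv, ← max_u u hu1]
    apply max_le_max le_rfl
    apply mul_le_mul_of_nonneg_left _ (by positivity)
    exact (mul_le_mul_of_nonneg_right hγ hr0.le).trans hAr
  have hlo : ∀ (m : ℕ) (γ : K), b ≤ v γ → u ^ (L - m) ≤ max 1 (v (q ^ m * γ) * r) := by
    intro m γ hγ
    rw [hv, ← max_u u hu1]
    apply max_le_max le_rfl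
    apply mul_le_mul_of_nonneg_left _ (by positivity)
    rw [← hbr]
    exact mul_le_mul_of_nonneg_right hγ hr0.le
  have hGN : ∀ (γ : K) (H : PowerSeries K), v γ ≤ A → ConvergesTo v s q γ H →
      ∃ N, GN v r H N (∏ m ∈ Finset.range (L + k + 1),
        (max 1 (v (q ^ m * γ) * r)) ^ cbin s m) := by
    intro γ H hγ hH
    obtain ⟨N, hN⟩ := GN.Hpartial_tail hna hr0 s q γ (L + k) (by
      intro m hm
      have := (le_max_right 1 _).trans (hup m γ hγ)
      rwa [Nat.sub_eq_zero_of_le hm.le, pow_zero] at this)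
    exact ⟨N, GN.limit hna s q γ H hH _ _ _ hN⟩
  choose Nα hNα using fun i => hGN (α i) (Hα i) (hAα i) (hHα i)
  choose Nβ hNβ using fun j => hGN (β j) (Hβ j) (hAβ j) (hHβ j)
  have hPA := GN.prod hna hr0 Finset.univ fun i _ => hNα i
  have hPB := GN.prod hna hr0 Finset.univ fun i _ => hNβ i
  obtain ⟨N, x, hx1, hDx⟩ := GN.of_tendsto (v := v) D (by rw [hD0]; exact one_ne_zero)
    (hent r hr0)
  rw [hD0, map_one] at hx1
  have hmul := hDx.mul hna hr0 hPB
  rw [hD] at hmul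
  have heq := hmul.unique hPA
  have hA : (∏ i : Fin R, ∏ m ∈ Finset.range (L + k + 1),
      (max 1 (v (q ^ m * α i) * r)) ^ cbin s m) ≤ (u ^ FF s (L + k)) ^ R := by
    have : ∀ i ∈ (Finset.univ : Finset (Fin R)), (∏ m ∈ Finset.range (L + k + 1),
      (max 1 (v (q ^ m * α i) * r)) ^ cbin s m) ≤ u ^ FF s (L + k) := by
      intro i _
      rw [← prod_u s (L + k) (L + k) u le_rfl]
      apply Finset.prod_le_prod
      · intro m _; positivity
      · intro m _
        exact pow_le_pow_left₀ (by positivity) (hup m _ (hAα i)) _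
    refine (Finset.prod_le_prod (fun i _ => ?_) this).trans (by simp)
    exact Finset.prod_nonneg fun m _ => by positivity
  have hB : (u ^ FF s L) ^ S ≤ (∏ i : Fin S, ∏ m ∈ Finset.range (L + k + 1),
      (max 1 (v (q ^ m * β i) * r)) ^ cbin s m) := by
    have : ∀ i ∈ (Finset.univ : Finset (Fin S)), u ^ FF s L ≤ (∏ m ∈ Finset.range (L + k + 1),
      (max 1 (v (q ^ m * β i) * r)) ^ cbin s m) := by
      intro i _
      rw [← prod_u s L (L + k) u (by omega)]
      apply Finset.prod_le_prod
      · intro m _; positivity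
      · intro m _
        exact pow_le_pow_left₀ (by positivity) (hlo m _ (hb i)) _
    refine le_trans (by simp) (Finset.prod_le_prod (fun i _ => ?_) this)
    positivity
  have hfin : (u ^ FF s L) ^ S ≤ (u ^ FF s (L + k)) ^ R := by
    refine hB.trans (le_trans ?_ hA)
    rw [← heq]
    exact le_mul_of_one_le_left hPB.pos.le hx1
  clear_value u
  rw [← pow_mul, ← pow_mul, pow_le_pow_iff_right₀ hu1] at hfin
  nlinarith

end HS
end
end

section
/- Lifting acyclicity through reduction (Theorem 3.3(1), Theorem A'): for any i with 0 ≤ i ≤ n, if H^i(C̄^•) = 0 then H^i(C^•) = 0. -/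
open scoped BigOperators

noncomputable section

namespace HS

/-- Transport an element of a ℤ-indexed family along an equality of indices. -/
def castC {C : ℤ → Type} {i j : ℤ} (h : i = j) (x : C i) : C j := h ▸ x

theorem lift_aux {O A B E : Type} [CommRing O] (ϖ : O) [AddCommGroup A] [AddCommGroup B]
    [AddCommGroup E] [Module O A] [Module O B] [Module O E]
    (D : A →ₗ[O] B) (d : B →ₗ[O] E) (hD : ∀ y, d (D y) = 0)
    (htf : ∀ e : E, ϖ • e = 0 → e = 0)
    (hsepB : ∀ x : B, (∀ k : ℕ, ∃ y, x = ϖ ^ k • y) → x = 0)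
    (hcA : ∀ g : ℕ → A, (∀ k, ∃ y, g (k + 1) - g k = ϖ ^ k • y) →
      ∃ x, ∀ k, ∃ y, x - g k = ϖ ^ k • y)
    (hred : ∀ x : B, (∃ z, d x = ϖ • z) → ∃ (y : A) (z : B), x = D y + ϖ • z)
    (x : B) (hx : d x = 0) : ∃ y, x = D y := by
  have step : ∀ b : {b : B // d b = 0}, ∃ (y : A) (c : {b : B // d b = 0}),
      b.1 = D y + ϖ • c.1 := by
    rintro ⟨b, hb⟩
    obtain ⟨y, z, h⟩ := hred b ⟨0, by simp [hb]⟩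
    refine ⟨y, ⟨z, htf _ ?_⟩, h⟩
    rw [h, map_add, hD, map_smul, zero_add] at hb
    exact hb
  choose Y Z hYZ using step
  let X : ℕ → {b : B // d b = 0} := fun k => Nat.rec ⟨x, hx⟩ (fun _ b => Z b) k
  have hX : ∀ k, (X k).1 = D (Y (X k)) + ϖ • (X (k + 1)).1 := fun k => hYZ (X k)
  let g : ℕ → A := fun k => ∑ j ∈ Finset.range k, ϖ ^ j • Y (X j)
  have hg : ∀ k, g (k + 1) = g k + ϖ ^ k • Y (X k) := fun k => Finset.sum_range_succ _ _
  have hxg : ∀ k, x = D (g k) + ϖ ^ k • (X k).1 := by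
    intro k
    induction k with
    | zero => simp [g, X]
    | succ k ih =>
      rw [hg, map_add, map_smul, pow_succ, mul_smul, add_assoc, ← smul_add, ← hX]
      exact ih
  obtain ⟨y, hy⟩ := hcA g (fun k => ⟨Y (X k), by rw [hg]; abel⟩)
  refine ⟨y, sub_eq_zero.mp (hsepB _ fun k => ?_)⟩
  obtain ⟨w, hw⟩ := hy k
  refine ⟨(X k).1 - D w, ?_⟩
  rw [smul_sub, ← map_smul, ← hw, map_sub]
  nth_rewrite 1 [hxg k]
  abel

theorem castC_lin {O : Type} [CommRing O] {C : ℤ → Type} [∀ j, AddCommGroup (C j)]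
    [∀ j, Module O (C j)] (d : ∀ j : ℤ, C j →ₗ[O] C (j + 1))
    (hcx : ∀ (j : ℤ) (x : C j), d (j + 1) (d j x) = 0) (j i : ℤ) (h : j + 1 = i) :
    ∃ D : C j →ₗ[O] C i, (∀ y, D y = castC (C := C) h (d j y)) ∧ ∀ y, d i (D y) = 0 := by
  subst h
  exact ⟨d j, fun _ => rfl, hcx j⟩

/-- lifting acyclicity through reduction (Theorem A′, part 1).
`𝒪` is a ring with a nonzerodivisor `ϖ`, `ϖ`-adically separated and complete; `C^•` is a
cochain complex (indexed by `ℤ`, trivial outside `0..n`) of flat, `ϖ`-adically separated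
and complete `𝒪`-modules.  If the reduction `C̄^• = C^•/ϖC^•` is exact at `i`
(`H^i(C̄^•) = 0`), then `C^•` is exact at `i` (`H^i(C^•) = 0`). -/
theorem acyclicity_lifts
    (O : Type) [CommRing O] (ϖ : O)
    (hnzd : ∀ x : O, ϖ * x = 0 → x = 0)
    (hsep : ∀ x : O, (∀ k : ℕ, ∃ y, x = ϖ ^ k * y) → x = 0)
    (hcompl : ∀ g : ℕ → O, (∀ k, ∃ y, g (k + 1) - g k = ϖ ^ k * y) →
      ∃ x, ∀ k, ∃ y, x - g k = ϖ ^ k * y)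
    (n : ℕ) (C : ℤ → Type) [∀ j, AddCommGroup (C j)] [∀ j, Module O (C j)]
    (d : ∀ j : ℤ, C j →ₗ[O] C (j + 1))
    (hcx : ∀ (j : ℤ) (x : C j), d (j + 1) (d j x) = 0)
    (hbd : ∀ j : ℤ, j < 0 ∨ (n : ℤ) < j → Subsingleton (C j))
    (hflat : ∀ j, Module.Flat O (C j))
    (hCsep : ∀ (j : ℤ) (x : C j), (∀ k : ℕ, ∃ y, x = ϖ ^ k • y) → x = 0)
    (hCcompl : ∀ (j : ℤ) (g : ℕ → C j), (∀ k, ∃ y, g (k + 1) - g k = ϖ ^ k • y) →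
      ∃ x, ∀ k, ∃ y, x - g k = ϖ ^ k • y)
    (i : ℤ) (hi0 : 0 ≤ i) (hin : i ≤ (n : ℤ))
    (hred : ∀ x : C i, (∃ z, d i x = ϖ • z) →
      ∃ (y : C (i - 1)) (z : C i),
        x = castC (C := C) (show i - 1 + 1 = i by omega) (d (i - 1) y) + ϖ • z) :
    ∀ x : C i, d i x = 0 →
      ∃ y : C (i - 1), x = castC (C := C) (show i - 1 + 1 = i by omega) (d (i - 1) y) := by
  intro x hx
  obtain ⟨D, hD, hdD⟩ := castC_lin d hcx (i - 1) i (by omega)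
  simp only [← hD] at hred ⊢
  refine lift_aux ϖ D (d i) hdD ?_ (hCsep i) (hCcompl (i - 1)) hred x hx
  intro e he
  have hr : IsRegular ϖ := by
    have hl : IsLeftRegular ϖ := fun a b hab => sub_eq_zero.mp (hnzd _ (by
      rw [mul_sub]; exact sub_eq_zero.mpr hab))
    exact ⟨hl, fun a b hab => hl (by simpa [mul_comm] using hab)⟩
  haveI := hflat (i + 1)
  have hs : IsSMulRegular (C (i + 1)) ϖ := Module.Flat.isSMulRegular_of_isRegular hr
  exact hs (by simpa using he)

end HS
end
end

section
/- Freeness of top cohomology through reduction (Theorem 3.3(2), Theorem A'): if n ≥ 1, H^{n−1}(C̄^•) = 0 and H^n(C̄^•) is a free F-module of rank l, then H^n(C^•) is a finite free 𝒪-module of rank l. -/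
open scoped BigOperators

noncomputable section

namespace HS

/-- Transport, as a linear map. -/
def castL (O : Type) [CommRing O] (C : ℤ → Type) [∀ j, AddCommGroup (C j)]
    [∀ j, Module O (C j)] {i j : ℤ} (h : i = j) : C i →ₗ[O] C j where
  toFun x := h ▸ x
  map_add' := by cases h; intro x y; rfl
  map_smul' := by cases h; intro c x; rfl

theorem aux_free {O A B D : Type} [CommRing O] (ϖ : O)
    [AddCommGroup B] [Module O B] [AddCommGroup D] [Module O D]
    (hsep : ∀ x : O, (∀ k : ℕ, ∃ y, x = ϖ ^ k * y) → x = 0)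
    (hcompl : ∀ g : ℕ → O, (∀ k, ∃ y, g (k + 1) - g k = ϖ ^ k * y) →
      ∃ x, ∀ k, ∃ y, x - g k = ϖ ^ k * y)
    (e : A → B) (f : B →ₗ[O] D) (hfe : ∀ y, f (e y) = 0)
    (htf : ∀ x : D, ϖ • x = 0 → x = 0)
    (hDsep : ∀ (x : D), (∀ k : ℕ, ∃ y, x = ϖ ^ k • y) → x = 0)
    (hBcompl : ∀ (g : ℕ → B), (∀ k, ∃ y, g (k + 1) - g k = ϖ ^ k • y) →
      ∃ x, ∀ k, ∃ y, x - g k = ϖ ^ k • y)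
    (l : ℕ)
    (hred : ∀ x : B, (∃ z, f x = ϖ • z) → ∃ y z, x = e y + ϖ • z)
    (b : Fin l → D)
    (hspan : ∀ x : D, ∃ (aa : Fin l → O) (y : B) (z : D),
      x = ∑ i, aa i • b i + f y + ϖ • z)
    (hind : ∀ aa : Fin l → O, (∃ (y : B) (z : D), ∑ i, aa i • b i = f y + ϖ • z) →
      ∀ i, ∃ c : O, aa i = ϖ * c) :
    Nonempty (Module.Basis (Fin l) O (D ⧸ LinearMap.range f)) := by
  have key : ∀ aa : Fin l → O, (∃ y, ∑ i, aa i • b i = f y) →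
      ∃ c : Fin l → O, (∀ i, aa i = ϖ * c i) ∧ ∃ y, ∑ i, c i • b i = f y := by
    rintro aa ⟨y, hy⟩
    choose c hc using hind aa ⟨y, 0, by simpa using hy⟩
    have h1 : ϖ • ∑ i, c i • b i = f y := by
      rw [← hy, Finset.smul_sum]
      exact Finset.sum_congr rfl fun i _ => by rw [smul_smul, ← hc]
    obtain ⟨y', z, hz⟩ := hred y ⟨_, h1.symm⟩
    refine ⟨c, hc, z, ?_⟩
    rw [← sub_eq_zero]
    apply htf
    rw [smul_sub, h1, hz, map_add, hfe, map_smul, zero_add, sub_self]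
  have key2 : ∀ (k : ℕ) (aa : Fin l → O), (∃ y, ∑ i, aa i • b i = f y) →
      ∀ i, ∃ c, aa i = ϖ ^ k * c := by
    intro k
    induction k with
    | zero => intro aa _ i; exact ⟨aa i, by simp⟩
    | succ k ih =>
      intro aa h i
      obtain ⟨c, hc, hy⟩ := key aa h
      obtain ⟨c', hc'⟩ := ih c hy i
      exact ⟨c', by rw [hc, hc', pow_succ]; ring⟩
  refine ⟨Module.Basis.mk (v := fun i => (LinearMap.range f).mkQ (b i)) ?_ ?_⟩
  · rw [Fintype.linearIndependent_iff]
    intro g hg i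
    apply hsep
    intro k
    apply key2
    have : (LinearMap.range f).mkQ (∑ i, g i • b i) = 0 := by
      rw [map_sum, ← hg]
      exact Finset.sum_congr rfl fun i _ => by rw [map_smul]
    rw [Submodule.mkQ_apply, Submodule.Quotient.mk_eq_zero] at this
    obtain ⟨y, hy⟩ := this
    exact ⟨y, hy.symm⟩
  · rintro q -
    obtain ⟨x, rfl⟩ := Submodule.mkQ_surjective _ q
    choose a y z h using hspan
    let X : ℕ → D := fun k => z^[k] x
    have hX : ∀ k, X k = ∑ i, a (X k) i • b i + f (y (X k)) + ϖ • X (k+1) := by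
      intro k
      have : X (k+1) = z (X k) := Function.iterate_succ_apply' z k x
      rw [this]
      exact h _
    have hA : ∀ i, ∃ s : O, ∀ k, ∃ w,
        s - ∑ j ∈ Finset.range k, ϖ ^ j * a (X j) i = ϖ ^ k * w := fun i =>
      hcompl (fun k => ∑ j ∈ Finset.range k, ϖ ^ j * a (X j) i)
        fun k => ⟨a (X k) i, by simp [Finset.sum_range_succ]⟩
    choose s w hs using hA
    obtain ⟨t, ht⟩ := hBcompl (fun k => ∑ j ∈ Finset.range k, ϖ ^ j • y (X j))
        fun k => ⟨y (X k), by simp [Finset.sum_range_succ]⟩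
    choose u hu using ht
    have hpart : ∀ k, x = ∑ i, (∑ j ∈ Finset.range k, ϖ ^ j * a (X j) i) • b i
        + f (∑ j ∈ Finset.range k, ϖ ^ j • y (X j)) + ϖ ^ k • X k := by
      intro k
      induction k with
      | zero => simp [X]
      | succ k ih =>
        rw [ih]
        conv_lhs => rw [hX k]
        simp only [Finset.sum_range_succ, add_smul, Finset.sum_add_distrib, map_add, smul_add,
          map_smul, Finset.smul_sum, mul_smul, pow_succ]
        abel
    have hx : x = ∑ i, s i • b i + f t := by
      rw [← sub_eq_zero]
      apply hDsep
      intro k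
      refine ⟨X k - ∑ i, w i k • b i - f (u k), ?_⟩
      have e1 : ∀ i, s i = ∑ j ∈ Finset.range k, ϖ ^ j * a (X j) i + ϖ ^ k * w i k :=
        fun i => by rw [← hs]; ring
      have e2 : t = ∑ j ∈ Finset.range k, ϖ ^ j • y (X j) + ϖ ^ k • u k := by
        rw [← hu]; abel
      have e3 : ∑ i, s i • b i = ∑ i, (∑ j ∈ Finset.range k, ϖ ^ j * a (X j) i) • b i
          + ϖ ^ k • ∑ i, w i k • b i := by
        rw [Finset.smul_sum, ← Finset.sum_add_distrib]
        exact Finset.sum_congr rfl fun i _ => by rw [e1, add_smul, mul_smul]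
      have e4 : f t = f (∑ j ∈ Finset.range k, ϖ ^ j • y (X j)) + ϖ ^ k • f (u k) := by
        rw [← map_smul, ← map_add, ← e2]
      rw [e3, e4, smul_sub, smul_sub]
      conv_lhs => rw [hpart k]
      abel
    have hft : (LinearMap.range f).mkQ (f t) = 0 := by
      rw [Submodule.mkQ_apply, Submodule.Quotient.mk_eq_zero]
      exact ⟨t, rfl⟩
    rw [hx, map_add, hft, add_zero, map_sum]
    refine Submodule.sum_mem _ fun i _ => ?_
    rw [map_smul]
    exact Submodule.smul_mem _ _ (Submodule.subset_span ⟨i, rfl⟩)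

theorem aux_cx (O : Type) [CommRing O] (C : ℤ → Type) [∀ j, AddCommGroup (C j)]
    [∀ j, Module O (C j)] (d : ∀ j : ℤ, C j →ₗ[O] C (j + 1))
    (hcx : ∀ (j : ℤ) (x : C j), d (j + 1) (d j x) = 0) (i j : ℤ) (h : i + 1 = j) (x : C i) :
    d j (castC (C := C) h (d i x)) = 0 := by
  subst h; exact hcx i x

theorem aux_smul (O : Type) [CommRing O] (C : ℤ → Type) [∀ j, AddCommGroup (C j)]
    [∀ j, Module O (C j)] (ϖ : O) (i j : ℤ) (h : i = j) (x : C i)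
    (hx : ∃ z, castL O C h x = ϖ • z) : ∃ z, x = ϖ • z := by
  subst h; exact hx

/-- freeness of the top cohomology through reduction (Theorem A′, part 2).
With `𝒪`, `ϖ`, and the complex `C^•` as in Theorem A′, if `n ≥ 1`, `H^{n-1}(C̄^•) = 0`, and
`H^n(C̄^•)` is a free `F = 𝒪/ϖ𝒪`-module of rank `l` (expressed by an `l`-element subset of
`C^n` which generates and is independent modulo `ϖC^n + im ∂^{n-1}`), then
`H^n(C^•) = C^n / im ∂^{n-1}` is a finite free `𝒪`-module of rank `l`. -/
theorem top_cohomology_free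
    (O : Type) [CommRing O] (ϖ : O)
    (hnzd : ∀ x : O, ϖ * x = 0 → x = 0)
    (hsep : ∀ x : O, (∀ k : ℕ, ∃ y, x = ϖ ^ k * y) → x = 0)
    (hcompl : ∀ g : ℕ → O, (∀ k, ∃ y, g (k + 1) - g k = ϖ ^ k * y) →
      ∃ x, ∀ k, ∃ y, x - g k = ϖ ^ k * y)
    (n : ℕ) (hn : 1 ≤ n)
    (C : ℤ → Type) [∀ j, AddCommGroup (C j)] [∀ j, Module O (C j)]
    (d : ∀ j : ℤ, C j →ₗ[O] C (j + 1))
    (hcx : ∀ (j : ℤ) (x : C j), d (j + 1) (d j x) = 0)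
    (hbd : ∀ j : ℤ, j < 0 ∨ (n : ℤ) < j → Subsingleton (C j))
    (hflat : ∀ j, Module.Flat O (C j))
    (hCsep : ∀ (j : ℤ) (x : C j), (∀ k : ℕ, ∃ y, x = ϖ ^ k • y) → x = 0)
    (hCcompl : ∀ (j : ℤ) (g : ℕ → C j), (∀ k, ∃ y, g (k + 1) - g k = ϖ ^ k • y) →
      ∃ x, ∀ k, ∃ y, x - g k = ϖ ^ k • y)
    (l : ℕ)
    (hredprev : ∀ x : C ((n : ℤ) - 1), (∃ z, d ((n : ℤ) - 1) x = ϖ • z) →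
      ∃ (y : C ((n : ℤ) - 1 - 1)) (z : C ((n : ℤ) - 1)),
        x = castC (C := C) (show (n : ℤ) - 1 - 1 + 1 = (n : ℤ) - 1 by omega)
          (d ((n : ℤ) - 1 - 1) y) + ϖ • z)
    (hfree : ∃ b : Fin l → C (n : ℤ),
      (∀ x : C (n : ℤ), ∃ (aa : Fin l → O) (y : C ((n : ℤ) - 1)) (z : C (n : ℤ)),
        x = ∑ i, aa i • b i +
          castC (C := C) (show (n : ℤ) - 1 + 1 = (n : ℤ) by omega) (d ((n : ℤ) - 1) y) +
          ϖ • z) ∧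
      (∀ aa : Fin l → O, (∃ (y : C ((n : ℤ) - 1)) (z : C (n : ℤ)),
          ∑ i, aa i • b i =
            castC (C := C) (show (n : ℤ) - 1 + 1 = (n : ℤ) by omega) (d ((n : ℤ) - 1) y) +
            ϖ • z) →
        ∀ i, ∃ c : O, aa i = ϖ * c)) :
    Nonempty (Module.Basis (Fin l) O
      (C (n : ℤ) ⧸ LinearMap.range
        ((castL O C (show (n : ℤ) - 1 + 1 = (n : ℤ) by omega)).comp (d ((n : ℤ) - 1))))) := by
  obtain ⟨b, hb1, hb2⟩ := hfree
  have hf := hflat (n : ℤ)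
  refine aux_free ϖ hsep hcompl
    (fun y => castC (C := C) (show (n : ℤ) - 1 - 1 + 1 = (n : ℤ) - 1 by omega)
          (d ((n : ℤ) - 1 - 1) y)) _ ?_ ?_ (hCsep _) (hCcompl _) l ?_ b hb1 hb2
  · intro y
    rw [LinearMap.comp_apply, aux_cx O C d hcx, map_zero]
  · intro x hx
    have hreg : ϖ ∈ nonZeroDivisors O :=
      mem_nonZeroDivisors_iff_right.mpr fun p hp => hnzd p (by rw [mul_comm]; exact hp)
    have hreg' : IsSMulRegular (C (n : ℤ)) ϖ := Module.Flat.isSMulRegular_of_nonZeroDivisors hreg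
    exact hreg' (by simpa using hx)
  · intro x hx
    exact hredprev x (aux_smul O C ϖ _ _ _ _ hx)

end HS
end
end

section
/- Weighted lattice-point asymptotics (equation (2.6) in the proof of Theorem 2.2(b)): as x → +∞, Σ_{(u,i) ∈ M(Γ)×I with b'·w(u)+c_i ≤ x} (x − b'·w(u) − c_i) = (|I| · vol(Γ) / ((s̃+1) · (b')^{s̃})) · x^{s̃+1} + O(x^{s̃}); that is, the difference between the left-hand side and the leading term is bounded in absolute value by a constant times x^{s̃} for all sufficiently large x. -/
open scoped BigOperators Classical Pointwise

noncomputable section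

namespace HS

open MeasureTheory

lemma smul_pre {m n : ℕ} (φ : (Fin m → ℝ) →ₗ[ℝ] (Fin n → ℝ)) (Γ : Set (Fin n → ℝ)) (t : ℝ) (ht : 0 < t)
    (x : Fin m → ℝ) : x ∈ t • (φ ⁻¹' Γ) ↔ φ x ∈ t • Γ := by
  rw [Set.mem_smul_set_iff_inv_smul_mem₀ ht.ne', Set.mem_smul_set_iff_inv_smul_mem₀ ht.ne']
  simp

lemma fin_pts {d : ℕ} (K : Set (Fin d → ℝ)) (hK : Bornology.IsBounded K) :
    {z : Fin d → ℤ | toR z ∈ K}.Finite := by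
  obtain ⟨R, hR⟩ := hK.exists_norm_le
  refine (Set.finite_Icc (fun _ => -⌈R⌉ : Fin d → ℤ) (fun _ => ⌈R⌉)).subset ?_
  intro z hz
  have h1 := hR _ hz
  have h2 : ∀ i, |(z i : ℝ)| ≤ R := fun i => (norm_le_pi_norm (toR z) i).trans h1
  constructor
  · intro i
    have := (abs_le.1 (h2 i)).1
    have h3 := Int.le_ceil R
    have : -(⌈R⌉:ℝ) ≤ z i := by linarith
    exact_mod_cast this
  · intro i
    have := (abs_le.1 (h2 i)).2
    have h3 := Int.le_ceil R
    have : (z i:ℝ) ≤ (⌈R⌉:ℝ) := by linarith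
    exact_mod_cast this

def cell (d : ℕ) : Set (Fin d → ℝ) := Set.univ.pi fun _ => Set.Ico 0 1

lemma cell_vol (d : ℕ) : volume (cell d) = 1 := by
  simp [cell, volume_pi_pi]

lemma cell_meas (d : ℕ) : MeasurableSet (cell d) :=
  MeasurableSet.univ_pi fun _ => measurableSet_Ico

lemma cell_norm {d : ℕ} {f : Fin d → ℝ} (hf : f ∈ cell d) : ‖f‖ ≤ 1 := by
  rw [pi_norm_le_iff_of_nonneg zero_le_one]
  intro i
  have := hf i trivial
  rw [Real.norm_eq_abs, abs_le]
  constructor <;> linarith [this.1, this.2]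

lemma union_vol {d : ℕ} (Z : Finset (Fin d → ℤ)) :
    volume (⋃ z ∈ Z, (fun x => x - toR z) ⁻¹' cell d) = Z.card := by
  rw [measure_biUnion_finset]
  · simp_rw [sub_eq_add_neg, measure_preimage_add_right, cell_vol]
    simp
  · intro z _ w _ hzw
    refine Set.disjoint_left.2 fun x hx hy => hzw ?_
    funext i
    have h1 := hx i trivial
    have h2 := hy i trivial
    simp only [toR, Pi.sub_apply, Set.mem_Ico] at h1 h2
    have e1 : ⌊x i⌋ = z i := Int.floor_eq_iff.2 ⟨by linarith, by linarith⟩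
    have e2 : ⌊x i⌋ = w i := Int.floor_eq_iff.2 ⟨by linarith, by linarith⟩
    rw [← e1, e2]
  · intro z _
    exact (cell_meas d).preimage (by fun_prop)

lemma vol_tr {d : ℕ} (K : Set (Fin d → ℝ)) (r : ℝ) (hr : 0 ≤ r) (q : Fin d → ℝ) :
    volume ((fun x => x + q) ⁻¹' (r • K)) = ENNReal.ofReal (r ^ d) * volume K := by
  rw [measure_preimage_add_right, Measure.addHaar_smul_of_nonneg _ hr]
  simp

lemma count_bounds {d : ℕ} (hd : d ≠ 0) (K : Set (Fin d → ℝ)) (hK : Convex ℝ K) (hc : IsCompact K)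
    (hi : (interior K).Nonempty) :
    ∃ a : ℝ, 0 ≤ a ∧ ∀ t : ℝ, 0 < t →
      (volume K).toReal * (max (t - a) 0) ^ d ≤ ({z : Fin d → ℤ | toR z ∈ t • K}.ncard : ℝ) ∧
      ({z : Fin d → ℤ | toR z ∈ t • K}.ncard : ℝ) ≤ (volume K).toReal * (t + a) ^ d := by
  obtain ⟨p, hp⟩ := hi
  obtain ⟨ρ, hρ, hball⟩ := Metric.nhds_basis_closedBall.mem_iff.1 (mem_interior_iff_mem_nhds.1 hp)
  have key : ∀ f : Fin d → ℝ, ‖f‖ ≤ 1 → f + ρ⁻¹ • p ∈ ρ⁻¹ • K := by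
    intro f hf
    refine ⟨p + ρ • f, hball ?_, ?_⟩
    · simp only [Metric.mem_closedBall, dist_eq_norm, add_sub_cancel_left, norm_smul,
        Real.norm_eq_abs, abs_of_pos hρ]
      nlinarith
    · simp only [smul_add, smul_smul, inv_mul_cancel₀ hρ.ne', one_smul]
      abel
  have hfinV : volume K ≠ ⊤ := hc.measure_lt_top.ne
  have ha : 0 ≤ ρ⁻¹ := by positivity
  refine ⟨ρ⁻¹, ha, fun t ht => ?_⟩
  have hfin := fin_pts (t • K) (hc.smul t).isBounded
  have hcard : ({z : Fin d → ℤ | toR z ∈ t • K}.ncard) = hfin.toFinset.card :=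
    Set.ncard_eq_toFinset_card _ hfin
  rw [hcard]
  constructor
  · rcases le_total (t - ρ⁻¹) 0 with h | h
    · rw [max_eq_right h, zero_pow hd, mul_zero]; positivity
    rw [max_eq_left h]
    have hsub : (fun x => x + (-(ρ⁻¹ • p))) ⁻¹' ((t - ρ⁻¹) • K) ⊆
        ⋃ z ∈ hfin.toFinset, (fun x => x - toR z) ⁻¹' cell d := by
      intro x hx
      have hz : (fun x => x - toR (fun i => ⌊x i⌋)) x ∈ cell d := by
        intro i _
        simp only [toR, Pi.sub_apply, Set.mem_Ico]
        constructor
        · linarith [Int.floor_le (x i)]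
        · linarith [Int.lt_floor_add_one (x i)]
      refine Set.mem_iUnion₂.2 ⟨fun i => ⌊x i⌋, ?_, hz⟩
      rw [Set.Finite.mem_toFinset]
      have h1 := key (-(x - toR (fun i => ⌊x i⌋))) (by rw [norm_neg]; exact cell_norm hz)
      have h2 := Set.add_mem_add (show x + (-(ρ⁻¹ • p)) ∈ (t - ρ⁻¹) • K from hx) h1
      rw [← hK.add_smul h ha] at h2
      simp only [sub_add_cancel] at h2
      show (toR fun i => ⌊x i⌋) ∈ t • K
      convert h2 using 1
      abel
    have := measure_mono (μ := volume) hsub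
    rw [union_vol, vol_tr _ _ h] at this
    have := ENNReal.toReal_mono (by simp) this
    rw [ENNReal.toReal_mul, ENNReal.toReal_ofReal (by positivity)] at this
    simp only [ENNReal.toReal_natCast] at this
    linarith
  · have hsub : (⋃ z ∈ hfin.toFinset, (fun x => x - toR z) ⁻¹' cell d) ⊆
        (fun x => x + ρ⁻¹ • p) ⁻¹' ((t + ρ⁻¹) • K) := by
      intro x hx
      obtain ⟨z, hz, hx⟩ := Set.mem_iUnion₂.1 hx
      rw [Set.Finite.mem_toFinset] at hz
      have h2 := Set.add_mem_add (show toR z ∈ t • K from hz) (key _ (cell_norm hx))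
      rw [← hK.add_smul ht.le ha] at h2
      show x + ρ⁻¹ • p ∈ (t + ρ⁻¹) • K
      convert h2 using 1
      simp only
      abel
    have := measure_mono (μ := volume) hsub
    rw [union_vol, vol_tr _ _ (by positivity)] at this
    have := ENNReal.toReal_mono (ENNReal.mul_ne_top (by simp) hfinV) this
    rw [ENNReal.toReal_mul, ENNReal.toReal_ofReal (by positivity)] at this
    simp only [ENNReal.toReal_natCast] at this
    linarith

lemma mem_std {s : ℕ} (x : Fin s → ℝ) :
    x ∈ Submodule.span ℤ (Set.range (Pi.basisFun ℝ (Fin s))) ↔ ∃ u : Fin s → ℤ, toR u = x := by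
  rw [Module.Basis.mem_span_iff_repr_mem]
  simp only [Pi.basisFun_repr, Set.mem_range, algebraMap_int_eq, eq_intCast]
  constructor
  · intro h
    choose u hu using h
    exact ⟨u, funext hu⟩
  · rintro ⟨u, rfl⟩ i
    exact ⟨u i, rfl⟩

lemma exists_phi {s : ℕ} (Vf : Finset (Fin s → ℚ)) (Γ : Set (Fin s → ℝ))
    (hΓ : Γ = convexHull ℝ ((fun v : Fin s → ℚ => fun i => (v i : ℝ)) '' (Vf : Set (Fin s → ℚ)))) :
    ∃ φ : (Fin (dimSpan Γ) → ℝ) →ₗ[ℝ] (Fin s → ℝ), Function.Injective φ ∧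
      LinearMap.range φ = Submodule.span ℝ Γ ∧ (∀ z, ∃ u, φ (toR z) = toR u) ∧
      (∀ u, toR u ∈ Submodule.span ℝ Γ → ∃ z, φ (toR z) = toR u) := by
  set V := Submodule.span ℝ Γ with hV
  let L : Submodule ℤ V := (Submodule.span ℤ (Set.range (Pi.basisFun ℝ (Fin s)))).comap
    (V.subtype.restrictScalars ℤ)
  have hL : ∀ x : V, x ∈ L ↔ ∃ u : Fin s → ℤ, toR u = x := fun x => mem_std _
  have : DiscreteTopology L := by
    have : DiscreteTopology
      ((Submodule.span ℤ (Set.range (Pi.basisFun ℝ (Fin s))) : Submodule ℤ (Fin s → ℝ)) : Set (Fin s → ℝ)) :=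
      inferInstanceAs (DiscreteTopology (Submodule.span ℤ (Set.range (Pi.basisFun ℝ (Fin s))) : Submodule ℤ (Fin s → ℝ)))
    refine DiscreteTopology.preimage_of_continuous_injective
      ((Submodule.span ℤ (Set.range (Pi.basisFun ℝ (Fin s))) : Submodule ℤ (Fin s → ℝ)) : Set (Fin s → ℝ)) ?_ (Submodule.injective_subtype V)
    exact LinearMap.continuous_of_finiteDimensional V.subtype
  have : IsZLattice ℝ L := ⟨by
    rw [← (Submodule.map_injective_of_injective (Submodule.injective_subtype V)).eq_iff,
      Submodule.map_span, Submodule.map_top, Submodule.range_subtype]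
    apply le_antisymm
    · rw [Submodule.span_le]
      rintro _ ⟨x, _, rfl⟩
      exact x.2
    · conv_lhs => rw [hV]
      rw [Submodule.span_le]
      nth_rewrite 1 [hΓ]
      refine convexHull_min ?_ (Submodule.convex _)
      rintro _ ⟨v, hv, rfl⟩
      have hvV : (fun i => (v i : ℝ)) ∈ V := by
        apply Submodule.subset_span
        rw [hΓ]
        exact subset_convexHull _ _ ⟨v, hv, rfl⟩
      let N : ℕ := ∏ i, (v i).den
      have hN : (N : ℝ) ≠ 0 := by
        simp [N, Finset.prod_eq_zero_iff]
      have hint : ∀ i, ∃ n : ℤ, (n : ℝ) = N * (v i : ℝ) := by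
        intro i
        obtain ⟨k, hk⟩ : (v i).den ∣ N := Finset.dvd_prod_of_mem _ (Finset.mem_univ i)
        refine ⟨k * (v i).num, ?_⟩
        rw [hk]
        have : ((v i).num : ℝ) = (v i).den * (v i : ℝ) := by
          have := Rat.den_mul_eq_num (v i)
          exact_mod_cast this.symm
        push_cast
        rw [this]; ring
      choose u hu using hint
      have : (fun i => (v i : ℝ)) = (N : ℝ)⁻¹ • toR u := by
        funext i
        simp only [toR, Pi.smul_apply, smul_eq_mul, hu]
        field_simp
      have h2 : toR u = (N : ℝ) • (fun i => (v i : ℝ)) := by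
        rw [this, smul_smul, mul_inv_cancel₀ hN, one_smul]
      show (fun i => (v i : ℝ)) ∈ _
      rw [this]
      apply Submodule.smul_mem
      apply Submodule.subset_span
      refine ⟨⟨toR u, h2 ▸ V.smul_mem _ hvV⟩, ?_, rfl⟩
      exact (hL _).2 ⟨u, rfl⟩⟩
  have hr : Module.finrank ℤ L = dimSpan Γ := ZLattice.rank ℝ L
  let b0 : Module.Basis (Fin (dimSpan Γ)) ℤ L := Module.finBasisOfFinrankEq ℤ L hr
  let b := b0.ofZLatticeBasis ℝ L
  let φ : (Fin (dimSpan Γ) → ℝ) →ₗ[ℝ] (Fin s → ℝ) := V.subtype ∘ₗ b.equivFun.symm.toLinearMap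
  have hφ : ∀ z : Fin (dimSpan Γ) → ℤ, φ (toR z) = ((b0.equivFun.symm z : L) : V) := by
    intro z
    simp only [φ, LinearMap.comp_apply, LinearEquiv.coe_coe, Submodule.subtype_apply]
    congr 1
    rw [LinearEquiv.symm_apply_eq]
    funext i
    rw [Module.Basis.equivFun_apply, Module.Basis.ofZLatticeBasis_repr_apply,
      ← Module.Basis.equivFun_apply, LinearEquiv.apply_symm_apply]
    rfl
  refine ⟨φ, (Submodule.injective_subtype V).comp b.equivFun.symm.injective, ?_, ?_, ?_⟩
  · rw [LinearMap.range_comp, LinearEquiv.range, Submodule.map_top, Submodule.range_subtype]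
  · intro z
    obtain ⟨u, hu⟩ := (hL _).1 (b0.equivFun.symm z).2
    exact ⟨u, by rw [hφ, hu]⟩
  · intro u hu
    refine ⟨b0.equivFun ⟨⟨toR u, hu⟩, (hL _).2 ⟨u, rfl⟩⟩, ?_⟩
    rw [hφ, LinearEquiv.symm_apply_apply]

lemma smul_mono' {s : ℕ} {Γ : Set (Fin s → ℝ)} (hconv : Convex ℝ Γ) (h0 : (0 : Fin s → ℝ) ∈ Γ)
    {r t : ℝ} (hr : 0 < r) (hrt : r ≤ t) {u : Fin s → ℝ} (hu : u ∈ r • Γ) : u ∈ t • Γ := by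
  have ht : 0 < t := hr.trans_le hrt
  obtain ⟨γ, hγ, rfl⟩ := hu
  refine ⟨(r / t) • γ, hconv.smul_mem_of_zero_mem h0 hγ ⟨by positivity, (div_le_one ht).2 hrt⟩, ?_⟩
  simp only [smul_smul]
  congr 1
  field_simp

lemma mem_iff {s : ℕ} {Γ : Set (Fin s → ℝ)} (hconv : Convex ℝ Γ) (hcl : IsClosed Γ)
    (h0 : (0 : Fin s → ℝ) ∈ Γ) {t : ℝ} (ht : 0 < t) (u : Fin s → ℝ) :
    (u ∈ coneOf Γ ∧ gauge Γ u ≤ t) ↔ u ∈ t • Γ := by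
  constructor
  · rintro ⟨⟨c, hc, γ, hγ, hu⟩, hg⟩
    have hne : {r : ℝ | 0 < r ∧ u ∈ r • Γ}.Nonempty := by
      rcases hc.eq_or_lt with h | h
      · refine ⟨1, one_pos, 0, h0, ?_⟩
        simp [hu, ← h]
      · exact ⟨c, h, γ, hγ, hu.symm⟩
    have h1 : ∀ r, t < r → r⁻¹ • u ∈ Γ := by
      intro r hr
      obtain ⟨q, ⟨hq, hqu⟩, hqr⟩ := exists_lt_of_csInf_lt hne (lt_of_le_of_lt hg hr)
      have := smul_mono' hconv h0 hq hqr.le hqu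
      rwa [Set.mem_smul_set_iff_inv_smul_mem₀ (ht.trans hr).ne'] at this
    rw [Set.mem_smul_set_iff_inv_smul_mem₀ ht.ne']
    have hlim : Filter.Tendsto (fun r : ℝ => r⁻¹ • u) (nhdsWithin t (Set.Ioi t)) (nhds (t⁻¹ • u)) := by
      apply Filter.Tendsto.mono_left _ nhdsWithin_le_nhds
      exact (tendsto_inv₀ ht.ne').smul_const u
    exact hcl.mem_of_tendsto hlim (Filter.eventually_of_mem self_mem_nhdsWithin h1)
  · intro hu
    refine ⟨?_, gauge_le_of_mem ht.le hu⟩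
    obtain ⟨γ, hγ, rfl⟩ := hu
    exact ⟨t, ht.le, γ, hγ, rfl⟩

lemma count_main {s : ℕ} (Vf : Finset (Fin s → ℚ)) (Γ : Set (Fin s → ℝ))
    (hΓ : Γ = convexHull ℝ ((fun v : Fin s → ℚ => fun i => (v i : ℝ)) '' (Vf : Set (Fin s → ℚ))))
    (h0 : (0 : Fin s → ℝ) ∈ Γ) (hd : dimSpan Γ ≠ 0) (hc : IsCompact Γ) (hconv : Convex ℝ Γ) :
    ∃ v a : ℝ, 0 ≤ v ∧ 0 ≤ a ∧ ∀ t : ℝ, 0 < t →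
      v * (max (t - a) 0) ^ dimSpan Γ ≤ ({z : Fin s → ℤ | toR z ∈ t • Γ}.ncard : ℝ) ∧
      ({z : Fin s → ℤ | toR z ∈ t • Γ}.ncard : ℝ) ≤ v * (t + a) ^ dimSpan Γ := by
  obtain ⟨φ, hinj, hrange, h1, h2⟩ := exists_phi Vf Γ hΓ
  have hemb : Topology.IsClosedEmbedding φ :=
    LinearMap.isClosedEmbedding_of_injective (LinearMap.ker_eq_bot.2 hinj)
  have hKc : IsCompact (φ ⁻¹' Γ) := hemb.isCompact_preimage hc
  have hKconv : Convex ℝ (φ ⁻¹' Γ) := hconv.linear_preimage φ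
  have himg : φ '' (φ ⁻¹' Γ) = Γ := by
    apply Set.image_preimage_eq_of_subset
    intro x hx
    have : x ∈ LinearMap.range φ := hrange ▸ Submodule.subset_span hx
    exact this
  have hspan : Submodule.span ℝ (φ ⁻¹' Γ) = ⊤ := by
    apply Submodule.map_injective_of_injective hinj
    rw [Submodule.map_span, himg, Submodule.map_top, hrange]
  have hKi : (interior (φ ⁻¹' Γ)).Nonempty := by
    rw [hKconv.interior_nonempty_iff_affineSpan_eq_top]
    have hz : (0 : Fin (dimSpan Γ) → ℝ) ∈ φ ⁻¹' Γ := by simpa using h0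
    have := affineSpan_insert_zero (k := ℝ) (φ ⁻¹' Γ)
    rw [Set.insert_eq_of_mem hz, hspan] at this
    apply SetLike.coe_injective
    rw [this]; rfl
  obtain ⟨a, ha, hb⟩ := count_bounds hd _ hKconv hKc hKi
  refine ⟨(volume (φ ⁻¹' Γ)).toReal, a, ENNReal.toReal_nonneg, ha, fun t ht => ?_⟩
  have hcard : {z : Fin s → ℤ | toR z ∈ t • Γ}.ncard
      = {z : Fin (dimSpan Γ) → ℤ | toR z ∈ t • (φ ⁻¹' Γ)}.ncard := by
    choose f hf using h1
    have htinj : ∀ {n : ℕ}, Function.Injective (toR : (Fin n → ℤ) → (Fin n → ℝ)) := by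
      intro n x y h
      funext i
      have := congrFun h i
      simpa [toR] using this
    have hfinj : Function.Injective f := by
      intro x y h
      have : φ (toR x) = φ (toR y) := by rw [hf, hf, h]
      exact htinj (hinj this)
    rw [← Set.ncard_image_of_injective _ hfinj]
    congr 1
    ext u
    simp only [Set.mem_ofPred_eq, Set.mem_image]
    constructor
    · intro hu
      have huV : toR u ∈ Submodule.span ℝ Γ := by
        obtain ⟨γ, hγ, hh⟩ := hu
        rw [← hh]
        exact Submodule.smul_mem _ _ (Submodule.subset_span hγ)
      obtain ⟨z, hz⟩ := h2 u huV
      refine ⟨z, ?_, htinj ?_⟩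
      · rw [smul_pre φ Γ t ht, hz]; exact hu
      · rw [← hf, hz]
    · rintro ⟨z, hz, rfl⟩
      rw [smul_pre φ Γ t ht, hf] at hz
      exact hz
  rw [hcard]
  exact hb t ht

lemma vol_eq {s : ℕ} (Γ : Set (Fin s → ℝ)) (d : ℕ) (v a : ℝ)
    (h : ∀ t : ℝ, 0 < t →
      v * (max (t - a) 0) ^ d ≤ ({z : Fin s → ℤ | toR z ∈ t • Γ}.ncard : ℝ) ∧
      ({z : Fin s → ℤ | toR z ∈ t • Γ}.ncard : ℝ) ≤ v * (t + a) ^ d) :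
    latticeVol Γ d = v := by
  have hlim : Filter.Tendsto (fun m : ℕ => a / (m : ℝ)) Filter.atTop (nhds 0) :=
    tendsto_const_div_atTop_nhds_zero_nat a
  apply Filter.Tendsto.limUnder_eq
  have l1 : Filter.Tendsto (fun m : ℕ => v * (max (1 - a / (m : ℝ)) 0) ^ d) Filter.atTop (nhds v) := by
    have := (((hlim.const_sub 1).max (tendsto_const_nhds (x := (0:ℝ)))).pow d).const_mul v
    simpa using this
  have l2 : Filter.Tendsto (fun m : ℕ => v * (1 + a / (m : ℝ)) ^ d) Filter.atTop (nhds v) := by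
    have := ((hlim.const_add 1).pow d).const_mul v
    simpa using this
  refine tendsto_of_tendsto_of_tendsto_of_le_of_le' l1 l2 ?_ ?_
  · filter_upwards [Filter.eventually_gt_atTop 0] with m hm
    have hm' : (0:ℝ) < m := by exact_mod_cast hm
    have := (h m hm').1
    rw [le_div_iff₀ (by positivity), mul_assoc, ← mul_pow, max_mul_of_nonneg _ _ hm'.le, sub_mul,
      div_mul_cancel₀ _ hm'.ne', one_mul, zero_mul]
    exact this
  · filter_upwards [Filter.eventually_gt_atTop 0] with m hm
    have hm' : (0:ℝ) < m := by exact_mod_cast hm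
    have := (h m hm').2
    rw [div_le_iff₀ (by positivity), mul_assoc, ← mul_pow, add_mul,
      div_mul_cancel₀ _ hm'.ne', one_mul]
    exact this

lemma pow_diff (x y M : ℝ) (hx : 0 ≤ x) (hy : 0 ≤ y) (hxM : x ≤ M) (hyM : y ≤ M) (n : ℕ) :
    |x ^ n - y ^ n| ≤ |x - y| * n * M ^ (n - 1) := by
  refine (abs_pow_sub_pow_le x y n).trans ?_
  have : max |x| |y| ≤ M := by rw [abs_of_nonneg hx, abs_of_nonneg hy]; exact max_le hxM hyM
  gcongr

lemma count_err (N v a t : ℝ) (d : ℕ) (hv : 0 ≤ v) (ha : 0 ≤ a) (ht : 0 < t)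
    (h1 : v * (max (t - a) 0) ^ d ≤ N) (h2 : N ≤ v * (t + a) ^ d) :
    |N - v * t ^ d| ≤ v * (a * d * (t + a) ^ (d - 1)) := by
  have e1 := pow_diff (t + a) t (t + a) (by positivity) ht.le le_rfl (by linarith) d
  have e2 := pow_diff (max (t - a) 0) t (t + a) (le_max_right _ _) ht.le
    (max_le (by linarith) (by linarith)) (by linarith) d
  have e3 : |max (t - a) 0 - t| ≤ a := by
    rw [abs_le]
    constructor
    · linarith [le_max_left (t - a) 0]
    · have : max (t - a) 0 ≤ t := max_le (by linarith) ht.le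
      linarith
  rw [add_sub_cancel_left, abs_of_nonneg ha] at e1
  have e4 : |max (t - a) 0 ^ d - t ^ d| ≤ a * d * (t + a) ^ (d - 1) := e2.trans (by gcongr)
  rw [abs_le] at e1 e4 ⊢
  constructor
  · nlinarith [mul_le_mul_of_nonneg_left e4.1 hv]
  · nlinarith [mul_le_mul_of_nonneg_left e1.2 hv]

/-- `S(y) = ∑ (y - w)` over a finite set with all `w ≤ y` -/
lemma sum_integral {α : Type*} (F : Finset α) (w : α → ℝ) (y : ℝ) (hw0 : ∀ u ∈ F, 0 ≤ w u)
    (hw : ∀ u ∈ F, w u ≤ y) (v B : ℝ) (d : ℕ) (hy : 0 ≤ y)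
    (hN : ∀ t, 0 < t → t ≤ y → |((F.filter fun u => w u ≤ t).card : ℝ) - v * t ^ d| ≤ B) :
    |∑ u ∈ F, (y - w u) - v * (y ^ (d + 1) / (d + 1))| ≤ B * y := by
  have hint : ∀ u ∈ F, IntervalIntegrable (fun t => if w u ≤ t then (1:ℝ) else 0) volume 0 y := by
    intro u _
    have : (fun t => if w u ≤ t then (1:ℝ) else 0) = (Set.Ici (w u)).indicator (fun _ => 1) := by
      funext t; simp [Set.indicator]
    rw [this, intervalIntegrable_iff]
    exact (integrableOn_const (by simp)).indicator measurableSet_Ici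
  have h1 : ∀ u ∈ F, ∫ t in (0:ℝ)..y, (if w u ≤ t then (1:ℝ) else 0) = y - w u := by
    intro u hu
    have hm : Monotone (fun t => if w u ≤ t then (1:ℝ) else 0) := by
      intro p q hpq
      dsimp only
      split_ifs <;> first | linarith | norm_num
    rw [← intervalIntegral.integral_add_adjacent_intervals (b := w u)
      hm.intervalIntegrable hm.intervalIntegrable]
    have i1 : ∫ t in (0:ℝ)..(w u), (if w u ≤ t then (1:ℝ) else 0) = ∫ t in (0:ℝ)..(w u), (0:ℝ) := by
      rw [intervalIntegral.integral_of_le (hw0 u hu), intervalIntegral.integral_of_le (hw0 u hu),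
        integral_Ioc_eq_integral_Ioo, integral_Ioc_eq_integral_Ioo]
      apply setIntegral_congr_fun measurableSet_Ioo
      intro t ht
      simp [ht.2]
    have i2 : ∫ t in (w u)..y, (if w u ≤ t then (1:ℝ) else 0) = ∫ t in (w u)..y, (1:ℝ) := by
      apply intervalIntegral.integral_congr
      intro t ht
      rw [Set.uIcc_of_le (hw u hu)] at ht
      simp [ht.1]
    rw [i1, i2]
    simp
  rw [← Finset.sum_congr rfl h1, ← intervalIntegral.integral_finsetSum hint]
  have h2 : v * (y ^ (d + 1) / (d + 1)) = ∫ t in (0:ℝ)..y, v * t ^ d := by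
    rw [intervalIntegral.integral_const_mul, integral_pow]
    simp
  rw [h2, ← intervalIntegral.integral_sub]
  · have := intervalIntegral.norm_integral_le_of_norm_le_const (a := (0:ℝ)) (b := y) (C := B)
      (f := fun t => (∑ u ∈ F, if w u ≤ t then (1:ℝ) else 0) - v * t ^ d) (by
        intro t ht
        rw [Set.uIoc_of_le hy] at ht
        have := hN t ht.1 ht.2
        rw [Real.norm_eq_abs]
        simpa using this)
    rwa [sub_zero, abs_of_nonneg hy, Real.norm_eq_abs] at this
  · have := IntervalIntegrable.sum F hint
    have e : (∑ i ∈ F, fun t => if w i ≤ t then (1:ℝ) else 0) =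
        fun t => ∑ i ∈ F, if w i ≤ t then (1:ℝ) else 0 := by
      funext t
      simp only [Finset.sum_apply]
    rw [← e]
    exact this
  · exact (Continuous.intervalIntegrable (by fun_prop) _ _)

/-- weighted lattice-point asymptotics: as `x → +∞`,
`∑_{b'w(u)+c_i ≤ x} (x - b'w(u) - c_i) = (|I|·vol(Γ)/((s̃+1)·b'^{s̃}))·x^{s̃+1} + O(x^{s̃})`,
the sum being over the (finitely many) `(u,i) ∈ M(Γ) × I` with `b'·w(u) + c_i ≤ x`. -/
theorem weighted_lattice_point_asymptotics
    (s : ℕ) (hs : 1 ≤ s) (Γ : Set (Fin s → ℝ))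
    (hpoly : ∃ Vf : Finset (Fin s → ℚ),
      Γ = convexHull ℝ ((fun v : Fin s → ℚ => fun i => (v i : ℝ)) '' (Vf : Set (Fin s → ℚ))))
    (h0 : (0 : Fin s → ℝ) ∈ Γ) (hne : Γ ≠ {0})
    (I : Type) [Fintype I] [Nonempty I]
    (b' : ℚ) (hb' : 0 < b') (c : I → ℚ) (hc : ∀ i, 0 ≤ c i) :
    (∀ x : ℝ, {ui : (Fin s → ℤ) × I | toR ui.1 ∈ coneOf Γ ∧
        (b' : ℝ) * gauge Γ (toR ui.1) + (c ui.2 : ℝ) ≤ x}.Finite) ∧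
    ∃ C₀ x₀ : ℝ, 0 ≤ C₀ ∧ ∀ x : ℝ, x₀ ≤ x →
      |(∑ᶠ (ui : (Fin s → ℤ) × I) (_ : toR ui.1 ∈ coneOf Γ ∧
            (b' : ℝ) * gauge Γ (toR ui.1) + (c ui.2 : ℝ) ≤ x),
          (x - ((b' : ℝ) * gauge Γ (toR ui.1) + (c ui.2 : ℝ)))) -
        (Fintype.card I : ℝ) * latticeVol Γ (dimSpan Γ) /
          (((dimSpan Γ : ℝ) + 1) * (b' : ℝ) ^ dimSpan Γ) * x ^ (dimSpan Γ + 1)|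
      ≤ C₀ * x ^ dimSpan Γ := by
  obtain ⟨Vf, hΓ⟩ := hpoly
  have hcomp : IsCompact Γ := by
    rw [hΓ]; exact (Vf.finite_toSet.image _).isCompact_convexHull (𝕜 := ℝ)
  have hconv : Convex ℝ Γ := by rw [hΓ]; exact convex_convexHull _ _
  have hd : dimSpan Γ ≠ 0 := by
    intro h
    have h' : Submodule.span ℝ Γ = ⊥ := Submodule.finrank_eq_zero.1 h
    apply hne
    apply Set.Subset.antisymm
    · intro x hx
      have : x ∈ Submodule.span ℝ Γ := Submodule.subset_span hx
      rw [h'] at this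
      simpa using this
    · simpa using h0
  have hb : (0:ℝ) < b' := by exact_mod_cast hb'
  have hc' : ∀ i, (0:ℝ) ≤ c i := fun i => by exact_mod_cast hc i
  have hmem : ∀ {t : ℝ}, 0 < t → ∀ u : Fin s → ℝ,
      (u ∈ coneOf Γ ∧ gauge Γ u ≤ t) ↔ u ∈ t • Γ :=
    fun ht u => mem_iff hconv hcomp.isClosed h0 ht u
  have hfinpt : ∀ t : ℝ, {z : Fin s → ℤ | toR z ∈ t • Γ}.Finite :=
    fun t => fin_pts _ (hcomp.smul t).isBounded
  have hfin : ∀ x : ℝ, {ui : (Fin s → ℤ) × I | toR ui.1 ∈ coneOf Γ ∧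
        (b' : ℝ) * gauge Γ (toR ui.1) + (c ui.2 : ℝ) ≤ x}.Finite := by
    intro x
    have ht : 0 < |x| / b' + 1 := by positivity
    refine ((hfinpt (|x| / b' + 1)).prod (Set.finite_univ (α := I))).subset ?_
    rintro ⟨u, i⟩ ⟨h1, h2⟩
    refine ⟨(hmem ht _).1 ⟨h1, ?_⟩, trivial⟩
    have h3 : gauge Γ (toR u) ≤ |x| / b' := by
      rw [le_div_iff₀ hb]
      have := hc' i
      have := le_abs_self x
      simp only at h2
      linarith
    linarith
  refine ⟨hfin, ?_⟩
  obtain ⟨v, a, hv, ha, hN⟩ := count_main Vf Γ hΓ h0 hd hcomp hconv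
  rw [vol_eq Γ (dimSpan Γ) v a hN]
  set d := dimSpan Γ with hdd
  set Ct : ℝ := ∑ i, (c i : ℝ) with hCt
  have hCt0 : 0 ≤ Ct := Finset.sum_nonneg fun i _ => hc' i
  have hcC : ∀ i, (c i : ℝ) ≤ Ct := fun i =>
    Finset.single_le_sum (f := fun i => (c i : ℝ)) (fun i _ => hc' i) (Finset.mem_univ i)
  set C1 : ℝ := b' * (v * (a * d) + v * (Ct / b')) * (1 / b' + a) ^ d with hC1
  have hC10 : 0 ≤ C1 := by positivity
  refine ⟨Fintype.card I * C1, 1 + Ct, by positivity, fun x hx => ?_⟩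
  have hx1 : 1 ≤ x := by linarith
  have hx0 : 0 < x := by linarith
  have hy : ∀ i, 0 < (x - c i) / b' := fun i => div_pos (by linarith [hcC i]) hb
  have hsum : (∑ᶠ (ui : (Fin s → ℤ) × I) (_ : toR ui.1 ∈ coneOf Γ ∧
            (b' : ℝ) * gauge Γ (toR ui.1) + (c ui.2 : ℝ) ≤ x),
          (x - ((b' : ℝ) * gauge Γ (toR ui.1) + (c ui.2 : ℝ)))) =
      ∑ i, ∑ u ∈ (hfinpt ((x - c i) / b')).toFinset,
        (x - ((b' : ℝ) * gauge Γ (toR u) + (c i : ℝ))) := by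
    have e := finsum_mem_eq_finite_toFinset_sum
      (fun ui : (Fin s → ℤ) × I => (x - ((b' : ℝ) * gauge Γ (toR ui.1) + (c ui.2 : ℝ)))) (hfin x)
    refine e.trans ?_
    refine Finset.sum_finset_product_right _ _ _ ?_
    rintro ⟨u, i⟩
    simp only [Set.Finite.mem_toFinset, Finset.mem_univ, true_and]
    refine Iff.trans ?_ (hmem (hy i) (toR u))
    show (toR u ∈ coneOf Γ ∧ (b' : ℝ) * gauge Γ (toR u) + (c i : ℝ) ≤ x) ↔ _
    rw [le_div_iff₀ hb]
    refine and_congr_right fun _ => ?_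
    constructor <;> intro h <;> linarith
  rw [hsum]
  have hlead : (Fintype.card I : ℝ) * v / (((d : ℝ) + 1) * (b' : ℝ) ^ d) * x ^ (d + 1) =
      ∑ _i : I, b' * (v * ((x / b') ^ (d + 1) / (d + 1))) := by
    rw [Finset.sum_const, Finset.card_univ, nsmul_eq_mul]
    have : (d:ℝ) + 1 ≠ 0 := by positivity
    rw [div_pow]
    field_simp
    ring
  rw [hlead, ← Finset.sum_sub_distrib]
  refine (Finset.abs_sum_le_sum_abs _ _).trans ?_
  have hi : ∀ i ∈ Finset.univ, |∑ u ∈ (hfinpt ((x - c i) / b')).toFinset,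
        (x - ((b' : ℝ) * gauge Γ (toR u) + (c i : ℝ))) -
        b' * (v * ((x / b') ^ (d + 1) / (d + 1)))| ≤ C1 * x ^ d := by
    intro i _
    set y := (x - c i) / b' with hyd
    have hy0 : 0 < y := hy i
    have hyx : y ≤ x / b' := by
      rw [hyd]; gcongr; linarith [hc' i]
    set M := (1 / b' + a) * x with hM
    have hxM : x / b' ≤ M := by
      have : M = x / b' + a * x := by rw [hM]; ring
      rw [this]; have : 0 ≤ a * x := by positivity
      linarith
    have hyaM : y + a ≤ M := by
      have : M = x / b' + a * x := by rw [hM]; ring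
      rw [this]; nlinarith
    have hM0 : 0 ≤ M := by positivity
    have e1 : ∑ u ∈ (hfinpt y).toFinset, (x - ((b' : ℝ) * gauge Γ (toR u) + (c i : ℝ))) =
        b' * ∑ u ∈ (hfinpt y).toFinset, (y - gauge Γ (toR u)) := by
      rw [Finset.mul_sum]
      refine Finset.sum_congr rfl fun u _ => ?_
      rw [hyd, mul_sub, mul_div_cancel₀ _ hb.ne']
      ring
    have e2 := sum_integral (hfinpt y).toFinset (fun u => gauge Γ (toR u)) y
      (fun u _ => gauge_nonneg _) (by
        intro u hu
        rw [Set.Finite.mem_toFinset] at hu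
        exact ((hmem hy0 _).2 hu).2) v (v * (a * d * M ^ (d - 1))) d hy0.le (by
        intro t ht hty
        have hf : ((hfinpt y).toFinset.filter fun u => gauge Γ (toR u) ≤ t).card
            = {z : Fin s → ℤ | toR z ∈ t • Γ}.ncard := by
          rw [Set.ncard_eq_toFinset_card _ (hfinpt t)]
          congr 1
          ext u
          simp only [Finset.mem_filter, Set.Finite.mem_toFinset, Set.mem_ofPred_eq]
          constructor
          · rintro ⟨h1, h2⟩
            exact (hmem ht _).1 ⟨((hmem hy0 _).2 h1).1, h2⟩
          · intro h
            exact ⟨smul_mono' hconv h0 ht hty h, ((hmem ht _).2 h).2⟩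
        rw [hf]
        refine (count_err _ v a t d hv ha ht (hN t ht).1 (hN t ht).2).trans ?_
        have : t + a ≤ M := by linarith
        gcongr)
    have e3 : |y ^ (d + 1) - (x / b') ^ (d + 1)| ≤ Ct / b' * (d + 1) * M ^ d := by
      have := pow_diff y (x / b') M hy0.le (by positivity) (by linarith) hxM (d + 1)
      refine this.trans ?_
      rw [Nat.add_sub_cancel]
      push_cast
      have h4 : |y - x / b'| ≤ Ct / b' := by
        have : y - x / b' = - (c i / b') := by rw [hyd]; ring
        rw [this, abs_neg, abs_of_nonneg (div_nonneg (hc' i) hb.le)]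
        gcongr
        exact hcC i
      gcongr
    have e4 : v * (a * d * M ^ (d - 1)) * y ≤ v * (a * d) * M ^ d := by
      have : M ^ d = M ^ (d - 1) * M := by
        rw [← pow_succ, Nat.sub_add_cancel (Nat.one_le_iff_ne_zero.2 hd)]
      rw [this]
      have hyM : y ≤ M := by linarith
      calc v * (a * d * M ^ (d - 1)) * y ≤ v * (a * d * M ^ (d - 1)) * M := by gcongr
        _ = _ := by ring
    have e5 : |v * (y ^ (d + 1) / (d + 1)) - v * ((x / b') ^ (d + 1) / (d + 1))|
        ≤ v * (Ct / b') * M ^ d := by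
      rw [← mul_sub, ← sub_div, abs_mul, abs_div, abs_of_nonneg hv,
        abs_of_pos (show (0:ℝ) < d + 1 by positivity), mul_assoc]
      refine mul_le_mul_of_nonneg_left ?_ hv
      rw [div_le_iff₀ (by positivity)]
      linarith
    rw [e1, ← mul_sub, abs_mul, abs_of_pos hb]
    have e6 := abs_sub_le (∑ u ∈ (hfinpt y).toFinset, (y - gauge Γ (toR u)))
      (v * (y ^ (d + 1) / (d + 1))) (v * ((x / b') ^ (d + 1) / (d + 1)))
    have e7 : C1 * x ^ d = b' * (v * (a * d) * M ^ d + v * (Ct / b') * M ^ d) := by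
      rw [hC1, hM, mul_pow]; ring
    rw [e7]
    refine mul_le_mul_of_nonneg_left ?_ hb.le
    linarith
  refine (Finset.sum_le_sum hi).trans ?_
  rw [Finset.sum_const, Finset.card_univ, nsmul_eq_mul, ← mul_assoc]

end HS
end
end
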